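/- Fix real exponents p > 1, q > 1 and T > 6p + 1 − 2q. For each n, let f̂_n be the minimum-Σ-weighted-ℓ2-norm Fourier interpolator of constant labels at the n regularly spaced points, and let ĝ_n be the minimum-ℓ2-norm interpolator built on d = n^T random-Fourier-sum (RFS) features whose Gaussian weight vectors are i.i.d. N(0, Σ(n,p,q)). Then the adversarial risk at radius 1/n of ĝ_n converges to that of f̂_n: for every δ > 0, the probability (over the Gaussian weights) that |C_adv(ĝ_n, 1/n) − C_adv(f̂_n, 1/n)| > δ tends to 0 as n → ∞. -/

import Mathlib

open MeasureTheory Filter ProbabilityTheory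

/-- The lifted Fourier feature map `φ : ℝ → ℝ^B`,
`φ(x) = (1/√2, sin (π x), cos (π x), …, sin (((B-1)/2) π x), cos (((B-1)/2) π x))`. -/
noncomputable def phiF (B : ℕ) (x : ℝ) : Fin B → ℝ := fun j =>
  if j.val = 0 then 1 / Real.sqrt 2
  else if j.val % 2 = 1 then Real.sin ((((j.val + 1) / 2 : ℕ) : ℝ) * Real.pi * x)
  else Real.cos (((j.val / 2 : ℕ) : ℝ) * Real.pi * x)

/-- The `n` regularly spaced training points `x_i = -1 + 2 i / n`, `i = 1, …, n`. -/
noncomputable def xtr (n : ℕ) (i : Fin n) : ℝ := -1 + 2 * ((i : ℕ) + 1 : ℝ) / (n : ℝ)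

/-- `α` interpolates the constant labels `1` at the regular grid: `Φ α = (1, …, 1)`. -/
def Interpolates (n B : ℕ) (α : Fin B → ℝ) : Prop :=
  ∀ i : Fin n, ∑ j, α j * phiF B (xtr n i) j = 1

/-- The bilevel diagonal weights: `λ₁ = γ B` with `γ = n^{-q}` on the constant feature,
and `λ_L = (1 - γ) B / (B - 1)` on all other features. -/
noncomputable def bilevelLam (n B : ℕ) (q : ℝ) : Fin B → ℝ := fun j =>
  if j.val = 0 then (n : ℝ) ^ (-q) * (B : ℝ)
  else (1 - (n : ℝ) ^ (-q)) * (B : ℝ) / ((B : ℝ) - 1)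

/-- `α̂` is a minimum-`Σ`-weighted-`ℓ₂`-norm interpolator. -/
def IsMinInterp (n B : ℕ) (lam : Fin B → ℝ) (α : Fin B → ℝ) : Prop :=
  Interpolates n B α ∧
    ∀ α' : Fin B → ℝ, Interpolates n B α' →
      ∑ j, (α j) ^ 2 / lam j ≤ ∑ j, (α' j) ^ 2 / lam j

/-- `B` is the odd integer closest to `n^p` with `2n ∣ B - 1`. -/
def BilevelB (n B : ℕ) (p : ℝ) : Prop :=
  Odd B ∧ 2 * n ∣ B - 1 ∧ |(B : ℝ) - (n : ℝ) ^ p| ≤ (n : ℝ)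

/-- The adversarial classification risk of `f` at radius `ε` against the constant `+1`
ground truth: `C_adv(f, ε) = (1/2) · Leb {x ∈ [-1,1] : ∃ x̃, |x̃ - x| ≤ ε ∧ f(x̃) ≤ 0}`. -/
noncomputable def advRisk (f : ℝ → ℝ) (ε : ℝ) : ℝ :=
  (volume {x ∈ Set.Icc (-1 : ℝ) 1 | ∃ y : ℝ, |y - x| ≤ ε ∧ f y ≤ 0}).toReal / 2

/-- The RFS learned function `ĝ(x) = ∑_i β_i ⟨z_i, φ(x)⟩`, for coefficients `β` on the
RFS features generated by the Gaussian weight matrix `W` (rows `z_i ∈ ℝ^B`). -/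
noncomputable def rfsFun (B d : ℕ) (W : Fin d → Fin B → ℝ) (β : Fin d → ℝ) (x : ℝ) : ℝ :=
  ∑ i, β i * ∑ j, W i j * phiF B x j

/-- `β` interpolates the constant labels `1` on the RFS features: `Φ^RFS β = (1, …, 1)`. -/
def RFSInterpolates (n B d : ℕ) (W : Fin d → Fin B → ℝ) (β : Fin d → ℝ) : Prop :=
  ∀ i : Fin n, rfsFun B d W β (xtr n i) = 1

/-- The distribution of the RFS weight matrix: `d` i.i.d. rows, each row Gaussian
`N(0, Σ(n,p,q))` in `ℝ^B` (with `Σ` diagonal, so the row is a product of scalar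
Gaussians `N(0, λ_j)`). -/
noncomputable def rfsMeasure (n B d : ℕ) (q : ℝ) : Measure (Fin d → Fin B → ℝ) :=
  Measure.pi fun _ : Fin d =>
    Measure.pi fun j : Fin B => gaussianReal 0 (bilevelLam n B q j).toNNReal



open MeasureTheory Filter ProbabilityTheory

/-- Linear images of product Gaussians. -/
lemma gauss_map {ι κ : Type*} [Fintype ι] [Fintype κ]
    (u : ι → NNReal) (v : κ → NNReal) (F : (ι → ℝ) → (κ → ℝ)) (hF : Measurable F)
    (G : (κ → ℝ) → (ι → ℝ))
    (hFG : ∀ x c, ∑ k, F x k * c k = ∑ i, x i * G c i)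
    (hG : ∀ c, ∑ i, (u i : ℝ) * (G c i) ^ 2 = ∑ k, (v k : ℝ) * (c k) ^ 2) :
    MeasurePreserving F (Measure.pi fun i => gaussianReal 0 (u i))
      (Measure.pi fun k => gaussianReal 0 (v k)) := by
  refine ⟨hF, ?_⟩
  have : IsProbabilityMeasure ((Measure.pi fun i => gaussianReal 0 (u i)).map F) :=
    Measure.isProbabilityMeasure_map hF.aemeasurable
  rw [← charFun_eq_pi_iff]
  intro t
  have h1 : charFun (((Measure.pi fun i => gaussianReal 0 (u i)).map F).map (WithLp.toLp 2)) t
      = charFun ((Measure.pi fun i => gaussianReal 0 (u i)).map (WithLp.toLp 2))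
          (WithLp.toLp 2 (G (fun k => t k))) := by
    rw [charFun_apply, charFun_apply]
    rw [← MeasurableEquiv.coe_toLp, ← MeasurableEquiv.coe_toLp, integral_map_equiv,
      integral_map_equiv, integral_map hF.aemeasurable]
    · congr 1
      ext x
      have := hFG x (fun k => t k)
      simp only [MeasurableEquiv.coe_toLp, PiLp.inner_apply]
      simp only [RCLike.inner_apply, conj_trivial]
      congr 3
      simpa [mul_comm] using this
    · apply Continuous.aestronglyMeasurable
      simp only [MeasurableEquiv.coe_toLp]
      fun_prop
  rw [h1, charFun_pi]
  simp only [charFun_gaussianReal, ← Complex.exp_sum]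
  congr 1
  have := hG (fun k => t k)
  have h2 : ((∑ i, (u i : ℝ) * (G (fun k => t k) i) ^ 2 : ℝ) : ℂ)
    = ((∑ k, (v k : ℝ) * (t k) ^ 2 : ℝ) : ℂ) := by rw [this]
  push_cast at h2
  simp only [Complex.ofReal_zero, mul_zero, zero_mul, zero_sub, Finset.sum_neg_distrib,
    ← Finset.sum_div]
  rw [h2]

lemma pi_uncurry {ι κ : Type*} [Fintype ι] [Fintype κ] (μ : κ → Measure ℝ)
    [∀ k, IsProbabilityMeasure (μ k)] :
    MeasurePreserving (fun (x : ι × κ → ℝ) i k => x (i, k))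
      (Measure.pi fun ik : ι × κ => μ ik.2)
      (Measure.pi fun _ : ι => Measure.pi μ) := by
  have hm : Measurable (fun (x : ι × κ → ℝ) i k => x (i, k)) := by fun_prop
  have hm2 : Measurable (fun (x : ι → κ → ℝ) (p : ι × κ) => x p.1 p.2) := by fun_prop
  have key : Measure.pi (fun ik : ι × κ => μ ik.2) =
      (Measure.pi fun _ : ι => Measure.pi μ).map
        (fun (x : ι → κ → ℝ) (p : ι × κ) => x p.1 p.2) := by
    refine Measure.pi_eq fun s hs => ?_
    rw [Measure.map_apply hm2 (MeasurableSet.univ_pi hs)]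
    have : (fun (x : ι → κ → ℝ) (p : ι × κ) => x p.1 p.2) ⁻¹' (Set.univ.pi s)
        = Set.univ.pi fun i => Set.univ.pi fun k => s (i, k) := by
      ext x; simp [Set.mem_pi]
    rw [this, Measure.pi_pi]
    simp only [Measure.pi_pi]
    rw [Fintype.prod_prod_type]
  refine ⟨hm, ?_⟩
  rw [key, Measure.map_map hm hm2]
  exact Measure.map_id

lemma pi_le_pi {ι : Type*} [Fintype ι] {α : ι → Type*} [∀ i, MeasurableSpace (α i)]
    (μ ν : ∀ i, Measure (α i)) [∀ i, IsFiniteMeasure (μ i)] [∀ i, IsFiniteMeasure (ν i)]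
    (C : ι → NNReal) (h : ∀ i, μ i ≤ (C i) • ν i) (s : Set (∀ i, α i)) :
    Measure.pi μ s ≤ (∏ i, C i : NNReal) * Measure.pi ν s := by
  have h1 : Measure.pi (fun i => C i • ν i) = (∏ i, C i) • Measure.pi ν := by
    refine Measure.pi_eq fun s hs => ?_
    simp only [Measure.smul_apply, Measure.pi_pi, ENNReal.smul_def, smul_eq_mul,
      Finset.prod_mul_distrib]
    push_cast
    rfl
  have h2 : Measure.pi μ ≤ Measure.pi (fun i => C i • ν i) := by
    have : (Measure.pi μ).toOuterMeasure ≤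
        OuterMeasure.pi (fun i => (C i • ν i).toOuterMeasure) := by
      rw [OuterMeasure.le_pi]
      intro s hs
      have : Measure.pi μ (Set.univ.pi s) = ∏ i, μ i (s i) := Measure.pi_pi _ _
      refine this.le.trans ?_
      exact Finset.prod_le_prod' fun i _ => h i (s i)
    refine Measure.le_iff.2 fun t ht => ?_
    have h3 : Measure.pi (fun i => C i • ν i) t
        = OuterMeasure.pi (fun i => (C i • ν i).toOuterMeasure) t := by
      rw [Measure.pi]; exact toMeasure_apply _ _ ht
    rw [h3]
    exact this t
  have := h2 s
  rw [h1] at this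
  simpa [ENNReal.smul_def] using this

lemma prod_le_of_section {X Y : Type*} [MeasurableSpace X] [MeasurableSpace Y]
    (μ : Measure X) (ν : Measure Y) [IsProbabilityMeasure μ] [SFinite ν] (E : Set (X × Y))
    (hE : MeasurableSet E) (ε : ENNReal) (h : ∀ x, ν (Prod.mk x ⁻¹' E) ≤ ε) :
    μ.prod ν E ≤ ε := by
  rw [Measure.prod_apply hE]
  calc _ ≤ ∫⁻ _, ε ∂μ := lintegral_mono h
    _ = ε := by simp

lemma gauss_le (v1 v2 : NNReal) (h1 : 0 < v1) (h : v1 ≤ v2) :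
    gaussianReal 0 v1 ≤ (NNReal.sqrt (v2 / v1)) • gaussianReal 0 v2 := by
  have h2 : 0 < v2 := h1.trans_le h
  rw [gaussianReal_of_var_ne_zero _ h1.ne', gaussianReal_of_var_ne_zero _ h2.ne']
  have : (NNReal.sqrt (v2 / v1)) • (volume.withDensity (gaussianPDF 0 v2))
     = volume.withDensity (fun x => (NNReal.sqrt (v2 / v1) : ENNReal) * gaussianPDF 0 v2 x) := by
    ext s hs
    rw [withDensity_apply _ hs, lintegral_const_mul _ (measurable_gaussianPDF 0 v2)]
    rw [Measure.smul_apply, withDensity_apply _ hs]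
    rfl
  rw [this]
  refine withDensity_mono (Filter.Eventually.of_forall fun x => ?_)
  simp only [gaussianPDF]
  rw [← ENNReal.ofReal_coe_nnreal, ← ENNReal.ofReal_mul (by positivity)]
  apply ENNReal.ofReal_le_ofReal
  simp only [gaussianPDFReal]
  have e1 : ((NNReal.sqrt (v2 / v1) : NNReal) : ℝ) * (√(2 * Real.pi * v2))⁻¹
      = (√(2 * Real.pi * v1))⁻¹ := by
    rw [Real.coe_sqrt, ← Real.sqrt_inv, ← Real.sqrt_inv, ← Real.sqrt_mul (by positivity)]
    congr 1
    push_cast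
    have : (v1:ℝ) ≠ 0 := by exact_mod_cast h1.ne'
    have : (v2:ℝ) ≠ 0 := by exact_mod_cast h2.ne'
    field_simp
  rw [← mul_assoc, e1]
  have h3 : (0:ℝ) < v1 := by exact_mod_cast h1
  have h4 : (v1:ℝ) ≤ v2 := by exact_mod_cast h
  refine mul_le_mul_of_nonneg_left (Real.exp_le_exp.2 ?_) (by positivity)
  rw [neg_div, neg_div, neg_le_neg_iff]
  exact div_le_div_of_nonneg_left (by positivity) (by positivity) (by linarith)


open MeasureTheory Filter ProbabilityTheory

open Classical in
lemma sum_choose_le (N d : ℕ) : ∑ k ∈ Finset.Iic d, N.choose k ≤ (N + 1) ^ d := by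
  rw [add_pow]
  have : Finset.Iic d = Finset.range (d + 1) := by ext; simp
  rw [this]
  refine Finset.sum_le_sum fun k hk => ?_
  have hk' : k ≤ d := by simpa [Nat.lt_succ_iff] using hk
  have h1 : N.choose k ≤ N ^ k := Nat.choose_le_pow N k
  have h2 : 1 ≤ d.choose k := Nat.choose_pos hk'
  simp only [one_pow, mul_one]
  calc N.choose k ≤ N ^ k * 1 := by simpa using h1
    _ ≤ N ^ k * d.choose k := Nat.mul_le_mul_left _ h2

open Classical in
/-- Cover counting via Sauer-Shelah. -/
lemma vc_count {κ : Type*} [Fintype κ] {d : ℕ} (a : κ → Fin d → ℝ) :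
    (Finset.univ.filter fun A : Finset κ =>
      ∃ β : Fin d → ℝ, ∀ k, k ∈ A ↔ 0 < ∑ i, β i * a k i).card
      ≤ (Fintype.card κ + 1) ^ d := by
  set F := Finset.univ.filter fun A : Finset κ =>
      ∃ β : Fin d → ℝ, ∀ k, k ∈ A ↔ 0 < ∑ i, β i * a k i with hF
  refine (Finset.card_le_card_shatterer F).trans (Finset.card_shatterer_le_sum_vcDim.trans ?_)
  have hvc : F.vcDim ≤ d := by
    refine Finset.sup_le fun s hs => ?_
    rw [Finset.mem_shatterer] at hs
    by_contra hcard
    push Not at hcard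
    have hdep : ¬ LinearIndependent ℝ (fun k : s => a k) := by
      intro hli
      have := hli.fintype_card_le_finrank
      simp at this
      omega
    obtain ⟨g, hg, k0, hk0⟩ := Fintype.not_linearIndependent_iff.1 hdep
    -- wlog positive
    obtain ⟨c, hc, k1, hk1⟩ : ∃ c : s → ℝ, ∑ k, c k • a k = 0 ∧ ∃ k1, 0 < c k1 := by
      rcases lt_or_gt_of_ne hk0 with h | h
      · refine ⟨fun k => - g k, ?_, k0, by simpa using h⟩
        simp only [neg_smul, Finset.sum_neg_distrib, hg, neg_zero]
      · exact ⟨g, hg, k0, h⟩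
    obtain ⟨A, hA, hsA⟩ := hs (t := s.filter fun k => ∃ h : k ∈ s, 0 < c ⟨k, h⟩)
      (Finset.filter_subset _ _)
    rw [hF, Finset.mem_filter] at hA
    obtain ⟨-, β, hβ⟩ := hA
    have hiff : ∀ k : s, 0 < ∑ i, β i * a k i ↔ 0 < c k := by
      intro k
      rw [← hβ]
      have := Finset.ext_iff.1 hsA k
      simp at this
      exact this
    have hz : ∑ k : s, c k * ∑ i, β i * a k i = 0 := by
      have h0 : ∀ i, ∑ k : s, c k * a k i = 0 := by
        intro i
        have := congrFun hc i
        simpa [Finset.sum_apply] using this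
      calc ∑ k : s, c k * ∑ i, β i * a k i = ∑ i, β i * ∑ k : s, c k * a k i := by
            simp_rw [Finset.mul_sum]
            rw [Finset.sum_comm]
            refine Finset.sum_congr rfl fun i _ => Finset.sum_congr rfl fun k _ => by ring
        _ = 0 := by simp only [h0, mul_zero, Finset.sum_const_zero]
    have hpos : 0 < ∑ k : s, c k * ∑ i, β i * a k i := by
      refine Finset.sum_pos' (fun k _ => ?_) ⟨k1, Finset.mem_univ _, ?_⟩
      · by_cases h : 0 < c k
        · exact (mul_pos h ((hiff k).2 h)).le
        · have h' : ¬ 0 < ∑ i, β i * a k i := fun h2 => h ((hiff k).1 h2)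
          push Not at h h'
          exact mul_nonneg_of_nonpos_of_nonpos h h'
      · exact mul_pos hk1 ((hiff k1).2 hk1)
    linarith
  calc _ ≤ ∑ k ∈ Finset.Iic d, (Fintype.card κ).choose k := by
        apply Finset.sum_le_sum_of_subset
        exact Finset.Iic_subset_Iic.2 hvc
    _ ≤ _ := sum_choose_le _ _

open Classical in
lemma card_agree {κ : Type*} [Fintype κ] (S A : Finset κ) :
    (Finset.univ.filter fun D : Finset κ => ∀ k ∈ S, (k ∈ D ↔ k ∈ A)).card * 2 ^ S.card
      ≤ 2 ^ Fintype.card κ := by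
  have h1 : (Finset.univ.filter fun D : Finset κ => ∀ k ∈ S, (k ∈ D ↔ k ∈ A)).card
      ≤ (Sᶜ).powerset.card := by
    refine Finset.card_le_card_of_injOn (fun D => D \ S) ?_ ?_
    · intro D _
      simp only [Finset.coe_powerset, Set.mem_preimage, Set.mem_powerset_iff]
      intro x hx
      simp at hx ⊢
      exact hx.2
    · intro D hD D' hD' h
      simp at hD hD'
      ext k
      by_cases hk : k ∈ S
      · rw [hD k hk, hD' k hk]
      · have := Finset.ext_iff.1 h k
        simpa [hk] using this
  rw [Finset.card_powerset] at h1
  calc _ ≤ 2 ^ (Sᶜ).card * 2 ^ S.card := Nat.mul_le_mul_right _ h1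
    _ = 2 ^ Fintype.card κ := by
      rw [← pow_add, Finset.card_compl, Nat.sub_add_cancel (Finset.card_le_univ S)]

/-- The bad event: some linear functional is positive on many full cells. -/
def coverBad (d m K j0 : ℕ) : Set (Fin d × (Fin m × Fin K) → ℝ) :=
  {x | ∃ J : Finset (Fin m), j0 ≤ J.card ∧ ∃ β : Fin d → ℝ,
    ∀ k : Fin m × Fin K, k.1 ∈ J → 0 < ∑ i, β i * x (i, k)}

lemma measurableSet_coverBad (d m K j0 : ℕ) : MeasurableSet (coverBad d m K j0) := by
  apply IsOpen.measurableSet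
  have : coverBad d m K j0 = ⋃ J : Finset (Fin m), ⋃ (_ : j0 ≤ J.card), ⋃ β : Fin d → ℝ,
      ⋂ k : Fin m × Fin K, {x | k.1 ∈ J → 0 < ∑ i, β i * x (i, k)} := by
    ext x; simp [coverBad]
  rw [this]
  refine isOpen_iUnion fun J => isOpen_iUnion fun _ => isOpen_iUnion fun β =>
    isOpen_iInter_of_finite fun k => ?_
  by_cases hk : k.1 ∈ J
  · simp only [hk, true_imp_iff]
    exact isOpen_lt (by fun_prop) (by fun_prop)
  · simp [hk]

open Classical in
/-- Flip the sign of the points outside `D`. -/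
noncomputable def flipD {d m K : ℕ} (D : Finset (Fin m × Fin K))
    (x : Fin d × (Fin m × Fin K) → ℝ) : Fin d × (Fin m × Fin K) → ℝ :=
  fun p => (if p.2 ∈ D then 1 else -1) * x p

lemma flipD_mp {d m K : ℕ} (D : Finset (Fin m × Fin K)) (v : NNReal) :
    MeasurePreserving (flipD (d := d) D) (Measure.pi fun _ => gaussianReal 0 v)
      (Measure.pi fun _ => gaussianReal 0 v) := by
  refine gauss_map _ _ _ (by unfold flipD; fun_prop) (flipD D) ?_ ?_
  · intro x c
    refine Finset.sum_congr rfl fun k _ => ?_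
    simp only [flipD]; ring
  · intro c
    refine Finset.sum_congr rfl fun k _ => ?_
    simp only [flipD]
    split_ifs <;> ring

open Classical in
lemma count_flip {d m K j0 : ℕ} (x : Fin d × (Fin m × Fin K) → ℝ) :
    (Finset.univ.filter fun D : Finset (Fin m × Fin K) =>
      flipD D x ∈ coverBad d m K j0).card * 2 ^ (j0 * K)
      ≤ 2 ^ m * (m * K + 1) ^ d * 2 ^ (m * K) := by
  set F := Finset.univ.filter fun A : Finset (Fin m × Fin K) =>
      ∃ β : Fin d → ℝ, ∀ k, k ∈ A ↔ 0 < ∑ i, β i * x (i, k) with hF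
  have hFc : F.card ≤ (m * K + 1) ^ d := by
    have := vc_count (fun (k : Fin m × Fin K) (i : Fin d) => x (i, k))
    simpa only [Fintype.card_prod, Fintype.card_fin] using this
  set JJ := (Finset.univ : Finset (Finset (Fin m))).filter fun J => j0 ≤ J.card with hJJ
  have hJc : JJ.card ≤ 2 ^ m := by
    refine (Finset.card_filter_le _ _).trans ?_
    simp
  set ag : Finset (Fin m) → Finset (Fin m × Fin K) → Finset (Finset (Fin m × Fin K)) :=
    fun J A => Finset.univ.filter fun D => ∀ k ∈ J ×ˢ (Finset.univ : Finset (Fin K)),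
      (k ∈ D ↔ k ∈ A) with hag
  have hsub : (Finset.univ.filter fun D : Finset (Fin m × Fin K) =>
      flipD D x ∈ coverBad d m K j0) ⊆ JJ.biUnion fun J => F.biUnion fun A => ag J A := by
    intro D hD
    simp only [Finset.mem_filter, Finset.mem_univ, true_and] at hD
    obtain ⟨J, hJ, β, hβ⟩ := hD
    refine Finset.mem_biUnion.2 ⟨J, by simp [hJJ, hJ], Finset.mem_biUnion.2
      ⟨Finset.univ.filter fun k => 0 < ∑ i, β i * x (i, k), ?_, ?_⟩⟩
    · simp only [hF, Finset.mem_filter, Finset.mem_univ, true_and]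
      exact ⟨β, fun k => Iff.rfl⟩
    · simp only [hag, Finset.mem_filter, Finset.mem_univ, true_and, Finset.mem_product, and_true]
      intro k hk
      have h1 := hβ k hk
      simp only [flipD] at h1
      by_cases hkD : k ∈ D
      · simp only [hkD, if_true, one_mul] at h1
        simp [hkD, h1]
      · simp only [hkD, if_false, neg_mul, one_mul, mul_neg, Finset.sum_neg_distrib] at h1
        simp only [hkD, false_iff]
        linarith
  have hone : ∀ J ∈ JJ, ∀ A ∈ F, (ag J A).card * 2 ^ (j0 * K) ≤ 2 ^ (m * K) := by
    intro J hJ A _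
    have h1 := card_agree (J ×ˢ (Finset.univ : Finset (Fin K))) A
    simp only [Finset.card_product, Finset.card_univ, Fintype.card_fin, Fintype.card_prod] at h1
    refine le_trans ?_ h1
    have : j0 ≤ J.card := by simpa [hJJ] using hJ
    exact Nat.mul_le_mul (le_of_eq (by simp only [hag]; congr!)) (Nat.pow_le_pow_right (by norm_num) (Nat.mul_le_mul_right _ this))
  calc _ ≤ (JJ.biUnion fun J => F.biUnion fun A => ag J A).card * 2 ^ (j0 * K) := by
        gcongr
    _ ≤ (∑ J ∈ JJ, ∑ A ∈ F, (ag J A).card) * 2 ^ (j0 * K) := by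
        gcongr
        exact Finset.card_biUnion_le.trans (Finset.sum_le_sum fun J _ => Finset.card_biUnion_le)
    _ = ∑ J ∈ JJ, ∑ A ∈ F, (ag J A).card * 2 ^ (j0 * K) := by
        simp_rw [Finset.sum_mul]
    _ ≤ ∑ J ∈ JJ, ∑ A ∈ F, 2 ^ (m * K) :=
        Finset.sum_le_sum fun J hJ => Finset.sum_le_sum fun A hA => hone J hJ A hA
    _ = JJ.card * F.card * 2 ^ (m * K) := by simp [mul_assoc]
    _ ≤ _ := by gcongr

lemma cover_prob (d m K j0 : ℕ) (v : NNReal) :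
    (2 : ENNReal) ^ (j0 * K) *
      (Measure.pi fun _ : Fin d × (Fin m × Fin K) => gaussianReal 0 v) (coverBad d m K j0)
      ≤ 2 ^ m * (m * K + 1) ^ d := by
  classical
  set μ := Measure.pi fun _ : Fin d × (Fin m × Fin K) => gaussianReal 0 v with hμ
  set E := coverBad d m K j0
  have hE : MeasurableSet E := measurableSet_coverBad d m K j0
  have h1 : ∀ D : Finset (Fin m × Fin K), ∫⁻ x, (flipD D ⁻¹' E).indicator 1 x ∂μ = μ E := by
    intro D
    rw [lintegral_indicator_one ((flipD_mp D v).measurable hE)]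
    exact (flipD_mp D v).measure_preimage hE.nullMeasurableSet
  have h2 : (2 : ENNReal) ^ (m * K) * μ E
      = ∫⁻ x, ∑ D : Finset (Fin m × Fin K), (flipD D ⁻¹' E).indicator 1 x ∂μ := by
    rw [lintegral_finsetSum]
    · simp_rw [h1]
      simp
    · intro D _
      exact measurable_one.indicator ((flipD_mp D v).measurable hE)
  have h3 : (2 : ENNReal) ^ (j0 * K) * ((2 : ENNReal) ^ (m * K) * μ E)
      ≤ 2 ^ m * (m * K + 1) ^ d * 2 ^ (m * K) := by
    rw [h2, ← lintegral_const_mul]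
    · calc _ ≤ ∫⁻ _, (2 ^ m * (m * K + 1) ^ d * 2 ^ (m * K) : ENNReal) ∂μ := by
            refine lintegral_mono fun x => ?_
            have := count_flip (j0 := j0) x
            have hs : ∑ D : Finset (Fin m × Fin K), (flipD D ⁻¹' E).indicator (1 : (Fin d × (Fin m × Fin K) → ℝ) → ENNReal) x
              = ((Finset.univ.filter fun D : Finset (Fin m × Fin K) =>
                  flipD D x ∈ coverBad d m K j0).card : ENNReal) := by
              rw [Finset.card_filter]
              push_cast
              refine Finset.sum_congr rfl fun D _ => ?_
              simp [Set.indicator_apply, E]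
            simp only [hs]
            rw [mul_comm]
            exact_mod_cast this
        _ = _ := by simp
    · exact Finset.measurable_fun_sum _ fun D _ =>
        measurable_one.indicator ((flipD_mp D v).measurable hE)
  have h4 : (2 : ENNReal) ^ (m * K) * ((2 : ENNReal) ^ (j0 * K) * μ E)
      ≤ 2 ^ (m * K) * (2 ^ m * (m * K + 1) ^ d) := by
    calc _ = (2 : ENNReal) ^ (j0 * K) * ((2 : ENNReal) ^ (m * K) * μ E) := by ring
      _ ≤ _ := h3
      _ = _ := by ring
  exact (ENNReal.mul_le_mul_iff_right (by simp) (by finiteness)).1 h4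


open MeasureTheory Filter ProbabilityTheory

lemma sum_range_odd (f : ℕ → ℝ) (M : ℕ) :
    ∑ j ∈ Finset.range (2 * M + 1), f j
      = f 0 + ∑ m ∈ Finset.range M, (f (2 * m + 1) + f (2 * m + 2)) := by
  induction M with
  | zero => simp
  | succ M ih =>
    rw [show 2 * (M + 1) + 1 = 2 * M + 1 + 1 + 1 by ring, Finset.sum_range_succ,
      Finset.sum_range_succ, ih, Finset.sum_range_succ]
    ring

/-- two-level weights -/
noncomputable def lam2 (B : ℕ) (l1 lL : ℝ) : Fin B → ℝ := fun j => if j.val = 0 then l1 else lL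

lemma phi_kernel (B M : ℕ) (hB : B = 2 * M + 1) (l1 lL x y : ℝ) :
    ∑ j, lam2 B l1 lL j * phiF B x j * phiF B y j
      = l1 / 2 + lL * ∑ m ∈ Finset.range M, Real.cos (((m : ℝ) + 1) * Real.pi * (x - y)) := by
  subst hB
  have h := Fin.sum_univ_eq_sum_range (fun j : ℕ =>
    (if j = 0 then l1 else lL) * (if j = 0 then 1 / Real.sqrt 2
      else if j % 2 = 1 then Real.sin ((((j + 1) / 2 : ℕ) : ℝ) * Real.pi * x)
      else Real.cos (((j / 2 : ℕ) : ℝ) * Real.pi * x)) *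
      (if j = 0 then 1 / Real.sqrt 2
      else if j % 2 = 1 then Real.sin ((((j + 1) / 2 : ℕ) : ℝ) * Real.pi * y)
      else Real.cos (((j / 2 : ℕ) : ℝ) * Real.pi * y))) (2 * M + 1)
  simp only [lam2, phiF]
  rw [h, sum_range_odd]
  congr 1
  · simp only [if_true]
    have : Real.sqrt 2 * Real.sqrt 2 = 2 := Real.mul_self_sqrt (by norm_num)
    have h2 : Real.sqrt 2 ≠ 0 := by positivity
    field_simp
    rw [Real.sq_sqrt (by norm_num)]
  · rw [Finset.mul_sum]
    refine Finset.sum_congr rfl fun m _ => ?_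
    have e1 : (2 * m + 1) % 2 = 1 := by omega
    have e2 : ¬ ((2 * m + 2) % 2 = 1) := by omega
    have e3 : (2 * m + 1 + 1) / 2 = m + 1 := by omega
    have e4 : (2 * m + 2) / 2 = m + 1 := by omega
    have e5 : ¬ (2 * m + 1 = 0) := by omega
    have e6 : ¬ (2 * m + 2 = 0) := by omega
    simp only [e1, e2, e3, e4, e5, e6, if_true, if_false]
    rw [show ((m : ℝ) + 1) * Real.pi * (x - y)
      = ((m : ℝ) + 1) * Real.pi * x - ((m : ℝ) + 1) * Real.pi * y by ring, Real.cos_sub]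
    push_cast
    ring

lemma cos_sum_mul (α θ : ℝ) (M : ℕ) :
    (∑ m ∈ Finset.range M, Real.cos (α + ((m : ℝ) + 1) * θ)) * (2 * Real.sin (θ / 2))
      = Real.sin (α + ((M : ℝ) + 1 / 2) * θ) - Real.sin (α + θ / 2) := by
  induction M with
  | zero => simp; ring_nf
  | succ M ih =>
    rw [Finset.sum_range_succ, add_mul, ih]
    have h1 : Real.sin (α + (((M + 1 : ℕ) : ℝ) + 1 / 2) * θ)
        = Real.sin (α + ((M : ℝ) + 1) * θ) * Real.cos (θ / 2)
          + Real.cos (α + ((M : ℝ) + 1) * θ) * Real.sin (θ / 2) := by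
      rw [← Real.sin_add]; push_cast; ring_nf
    have h2 : Real.sin (α + ((M : ℝ) + 1 / 2) * θ)
        = Real.sin (α + ((M : ℝ) + 1) * θ) * Real.cos (θ / 2)
          - Real.cos (α + ((M : ℝ) + 1) * θ) * Real.sin (θ / 2) := by
      rw [← Real.sin_sub]; ring_nf
    rw [h1, h2]
    ring

lemma sin_pi_div_ne (N : ℕ) (hN : 0 < N) (r : ℤ) (h : ¬ (N : ℤ) ∣ r) :
    Real.sin (Real.pi * r / N) ≠ 0 := by
  intro h0
  rw [Real.sin_eq_zero_iff] at h0
  obtain ⟨k, hk⟩ := h0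
  apply h
  refine ⟨k, ?_⟩
  have hN' : (N : ℝ) ≠ 0 := by positivity
  have hpi := Real.pi_ne_zero
  field_simp at hk
  have h3 : r = k * N := by exact_mod_cast hk.symm
  rw [h3, mul_comm]

/-- orthogonality on the `B`-grid -/
lemma grid_orth (M : ℕ) (r : ℤ) (h : ¬ ((2 * M + 1 : ℕ) : ℤ) ∣ r) :
    ∑ m ∈ Finset.range M, Real.cos (((m : ℝ) + 1) * Real.pi * (2 * r / ((2 * M + 1 : ℕ) : ℝ)))
      = - 1 / 2 := by
  have hs := sin_pi_div_ne (2 * M + 1) (by omega) r h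
  have h1 := cos_sum_mul 0 (2 * (Real.pi * r / ((2 * M + 1 : ℕ) : ℝ))) M
  rw [mul_div_cancel_left₀ _ (by norm_num : (2 : ℝ) ≠ 0)] at h1
  have h2 : (0:ℝ) + ((M : ℝ) + 1 / 2) * (2 * (Real.pi * r / ((2 * M + 1 : ℕ) : ℝ)))
      = r * Real.pi := by
    push_cast; field_simp; ring
  rw [h2, Real.sin_int_mul_pi, zero_add, zero_sub] at h1
  have h3 : ∑ m ∈ Finset.range M, Real.cos (((m : ℝ) + 1) * Real.pi * (2 * r / ((2 * M + 1 : ℕ) : ℝ)))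
    = ∑ m ∈ Finset.range M, Real.cos (0 + ((m : ℝ) + 1) * (2 * (Real.pi * r / ((2 * M + 1 : ℕ) : ℝ)))) := by
    refine Finset.sum_congr rfl fun m _ => ?_
    congr 1; ring
  rw [h3]
  have h4 : (∑ m ∈ Finset.range M, Real.cos (0 + ((m : ℝ) + 1) * (2 * (Real.pi * r / ((2 * M + 1 : ℕ) : ℝ)))) + 1 / 2) * (2 * Real.sin (Real.pi * r / ((2 * M + 1 : ℕ) : ℝ))) = 0 := by
    rw [add_mul, h1]; ring
  rcases mul_eq_zero.1 h4 with h5 | h5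
  · linarith
  · exact absurd h5 (by simpa using hs)

/-- sum over the training grid of one frequency -/
lemma train_freq (n : ℕ) (hn : 0 < n) (m : ℕ) (x : ℝ) :
    ∑ a : Fin n, Real.cos ((m : ℝ) * Real.pi * (xtr n a - x))
      = if n ∣ m then n * Real.cos ((m : ℝ) * Real.pi * (x + 1)) else 0 := by
  have hn' : (n : ℝ) ≠ 0 := by positivity
  have h0 : ∑ a : Fin n, Real.cos ((m : ℝ) * Real.pi * (xtr n a - x))
      = ∑ a ∈ Finset.range n, Real.cos (-((m : ℝ) * Real.pi * (x + 1))
          + ((a : ℝ) + 1) * (2 * (Real.pi * m / n))) := by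
    rw [← Fin.sum_univ_eq_sum_range (fun a : ℕ => Real.cos (-((m : ℝ) * Real.pi * (x + 1))
          + ((a : ℝ) + 1) * (2 * (Real.pi * m / n))))]
    refine Finset.sum_congr rfl fun a _ => ?_
    congr 1
    simp only [xtr]
    field_simp
    ring
  rw [h0]
  split_ifs with h
  · obtain ⟨k, rfl⟩ := h
    have : ∀ a ∈ Finset.range n, Real.cos (-(((n * k : ℕ) : ℝ) * Real.pi * (x + 1))
          + ((a : ℝ) + 1) * (2 * (Real.pi * ((n * k : ℕ) : ℝ) / n)))
        = Real.cos (((n * k : ℕ) : ℝ) * Real.pi * (x + 1)) := by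
      intro a _
      rw [← Real.cos_neg (((n * k : ℕ) : ℝ) * Real.pi * (x + 1))]
      rw [← Real.cos_add_nat_mul_two_pi (-(((n * k : ℕ) : ℝ) * Real.pi * (x + 1))) ((a + 1) * k)]
      congr 1
      push_cast
      field_simp
    rw [Finset.sum_congr rfl this]
    simp
  · have hs := sin_pi_div_ne n hn m (by exact_mod_cast h)
    have h1 := cos_sum_mul (-((m : ℝ) * Real.pi * (x + 1))) (2 * (Real.pi * m / n)) n
    rw [mul_div_cancel_left₀ _ (by norm_num : (2 : ℝ) ≠ 0)] at h1
    have h2 : -((m : ℝ) * Real.pi * (x + 1)) + ((n : ℝ) + 1 / 2) * (2 * (Real.pi * m / n))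
      = -((m : ℝ) * Real.pi * (x + 1)) + Real.pi * m / n + m * (2 * Real.pi) := by
      field_simp
      ring
    rw [h2, Real.sin_add_nat_mul_two_pi, sub_self] at h1
    rcases mul_eq_zero.1 h1 with h5 | h5
    · exact h5
    · exact absurd h5 (by simpa using hs)

lemma sum_multiples (n : ℕ) (hn : 0 < n) (K : ℕ) (f : ℕ → ℝ) :
    ∑ m ∈ Finset.range (n * K), (if n ∣ m + 1 then f (m + 1) else 0)
      = ∑ k ∈ Finset.range K, f ((k + 1) * n) := by
  induction K with
  | zero => simp
  | succ K ih =>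
    rw [mul_add, mul_one, Finset.sum_range_add, ih, Finset.sum_range_succ]
    congr 1
    rw [Finset.sum_eq_single (n - 1)]
    · have : n * K + (n - 1) + 1 = (K + 1) * n := by
        rw [add_assoc, Nat.sub_add_cancel hn]; ring
      rw [this]; simp
    · intro b hb hne
      have hb' : b < n := by simpa using hb
      rw [if_neg]
      rw [add_assoc, Nat.dvd_add_right (Dvd.intro _ rfl)]
      intro hd
      have := Nat.le_of_dvd (by omega) hd
      omega
    · intro h; simp at h; omega

/-- averaged kernel -/
noncomputable def kbar (n K : ℕ) (l1 lL x : ℝ) : ℝ :=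
  l1 / 2 + lL * ∑ k ∈ Finset.range K, Real.cos (((k : ℝ) + 1) * (n * Real.pi * (x + 1)))

lemma mean_kernel (n K B : ℕ) (hn : 0 < n) (hB : B = 2 * (n * K) + 1) (l1 lL x : ℝ) :
    ∑ a : Fin n, ∑ j, lam2 B l1 lL j * phiF B (xtr n a) j * phiF B x j
      = n * kbar n K l1 lL x := by
  simp_rw [phi_kernel B (n * K) hB]
  rw [Finset.sum_add_distrib, ← Finset.mul_sum, Finset.sum_comm]
  have : ∀ m ∈ Finset.range (n * K),
      ∑ a : Fin n, Real.cos (((m : ℝ) + 1) * Real.pi * (xtr n a - x))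
      = if n ∣ m + 1 then (fun l : ℕ => n * Real.cos ((l : ℝ) * Real.pi * (x + 1))) (m + 1)
        else 0 := by
    intro m _
    rw [← train_freq n hn (m + 1) x]
    push_cast
    rfl
  rw [Finset.sum_congr rfl this, sum_multiples n hn K
    (fun l : ℕ => n * Real.cos ((l : ℝ) * Real.pi * (x + 1)))]
  simp only [kbar, Finset.sum_const, Finset.card_univ, Fintype.card_fin, nsmul_eq_mul, mul_add]
  congr 1
  simp only [Finset.mul_sum]
  refine Finset.sum_congr rfl fun k _ => ?_
  push_cast
  ring_nf

lemma kbar_train (n K : ℕ) (hn : 0 < n) (l1 lL : ℝ) (a : Fin n) :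
    kbar n K l1 lL (xtr n a) = l1 / 2 + lL * K := by
  have hn' : (n : ℝ) ≠ 0 := by positivity
  have : ∀ k ∈ Finset.range K, Real.cos (((k : ℝ) + 1) * (n * Real.pi * (xtr n a + 1))) = 1 := by
    intro k _
    have : ((k : ℝ) + 1) * (n * Real.pi * (xtr n a + 1))
      = ((((k + 1) * (a + 1) : ℕ)) : ℝ) * (2 * Real.pi) := by
      simp only [xtr]; push_cast; field_simp; ring
    rw [this, Real.cos_nat_mul_two_pi]
  rw [kbar, Finset.sum_congr rfl this]
  simp

lemma dip_sum (K : ℕ) (hK : 0 < K) :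
    ∑ k ∈ Finset.range K, Real.cos (((k : ℝ) + 1) * (3 * Real.pi / (2 * K + 1))) ≤ - K / 5 := by
  have hK' : (1 : ℝ) ≤ K := by exact_mod_cast hK
  have hpi := Real.pi_pos
  set θ : ℝ := 3 * Real.pi / (2 * K + 1) with hθ
  have hθ0 : 0 < θ := by positivity
  have hθ1 : θ ≤ Real.pi := by rw [hθ, div_le_iff₀ (by positivity)]; nlinarith
  have h1 := cos_sum_mul 0 θ K
  have h2 : (0:ℝ) + ((K : ℝ) + 1 / 2) * θ = Real.pi / 2 + Real.pi := by
    rw [hθ]; field_simp; ring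
  rw [h2, Real.sin_add_pi, Real.sin_pi_div_two, zero_add] at h1
  simp only [zero_add] at h1
  set S := ∑ k ∈ Finset.range K, Real.cos (((k : ℝ) + 1) * θ)
  have hs0 : 0 < Real.sin (θ / 2) := Real.sin_pos_of_pos_of_lt_pi (by linarith) (by linarith)
  have hs1 : Real.sin (θ / 2) < θ / 2 := Real.sin_lt (by linarith)
  have hθK : θ * K ≤ 5 := by
    rw [hθ, div_mul_eq_mul_div, div_le_iff₀ (by positivity)]
    nlinarith [Real.pi_lt_d2]
  by_contra hc
  push Not at hc
  have : -(1:ℝ) - Real.sin (θ / 2) > (-K / 5) * (2 * Real.sin (θ / 2)) := by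
    rw [← h1]; exact mul_lt_mul_of_pos_right hc (by linarith)
  nlinarith

/-- dip point in cell `j` -/
noncomputable def dip (n K : ℕ) (j : ℕ) : ℝ :=
  if j % 2 = 0 then -1 + j / n + 3 / (n * (2 * K + 1))
  else -1 + (j + 1) / n - 3 / (n * (2 * K + 1))

lemma dip_mem (n K : ℕ) (hn : 0 < n) (hK : 0 < K) (j : ℕ) :
    dip n K j ∈ Set.Icc (-1 + (j : ℝ) / n) (-1 + ((j : ℝ) + 1) / n) := by
  have hn' : (0 : ℝ) < n := by exact_mod_cast hn
  have hK' : (1 : ℝ) ≤ K := by exact_mod_cast hK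
  have h1 : (3 : ℝ) / (n * (2 * K + 1)) ≤ 1 / n := by
    rw [div_le_div_iff₀ (by positivity) hn']
    nlinarith
  have h2 : (0 : ℝ) ≤ 3 / (n * (2 * K + 1)) := by positivity
  rw [dip, add_div]
  split_ifs <;> constructor <;> linarith

lemma kbar_dip (n K : ℕ) (hn : 0 < n) (hK : 0 < K) (j : ℕ) (l1 lL : ℝ) (hL : 0 ≤ lL) :
    kbar n K l1 lL (dip n K j) ≤ l1 / 2 - lL * K / 5 := by
  have hn' : (n : ℝ) ≠ 0 := by positivity
  have : ∀ k ∈ Finset.range K, Real.cos (((k : ℝ) + 1) * (n * Real.pi * (dip n K j + 1)))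
      = Real.cos (((k : ℝ) + 1) * (3 * Real.pi / (2 * K + 1))) := by
    intro k _
    rw [dip]
    split_ifs with h
    · obtain ⟨a, rfl⟩ : 2 ∣ j := Nat.dvd_of_mod_eq_zero h
      rw [← Real.cos_add_nat_mul_two_pi (((k : ℝ) + 1) * (3 * Real.pi / (2 * K + 1)))
        ((k + 1) * a)]
      congr 1
      push_cast
      field_simp
      ring
    · obtain ⟨a, ha⟩ : 2 ∣ j + 1 := by omega
      have ha' : (j : ℝ) + 1 = 2 * a := by exact_mod_cast ha
      rw [← Real.cos_neg, ← Real.cos_add_nat_mul_two_pi _ ((k + 1) * a), ha']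
      rw [← Real.cos_add_nat_mul_two_pi (((k : ℝ) + 1) * (3 * Real.pi / (2 * K + 1))) 0]
      congr 1
      push_cast
      field_simp
      ring
  rw [kbar, Finset.sum_congr rfl this]
  have := mul_le_mul_of_nonneg_left (dip_sum K hK) hL
  linarith


open MeasureTheory Filter ProbabilityTheory

/-- cell number `j` -/
def cell (n j : ℕ) : Set ℝ := Set.Icc (-1 + (j : ℝ) / n) (-1 + ((j : ℝ) + 1) / n)

lemma advRisk_le_one (f : ℝ → ℝ) (ε : ℝ) : advRisk f ε ≤ 1 := by
  rw [advRisk, div_le_one (by norm_num)]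
  calc _ ≤ (volume (Set.Icc (-1 : ℝ) 1)).toReal := by
        apply ENNReal.toReal_mono (by simp)
        exact measure_mono (fun x hx => hx.1)
    _ = 2 := by simp; norm_num

lemma advRisk_ge (n : ℕ) (hn : 0 < n) (f : ℝ → ℝ) (J : Finset ℕ) (hJ : ∀ j ∈ J, j < 2 * n)
    (h : ∀ j ∈ J, ∃ y ∈ cell n j, f y ≤ 0) :
    (J.card : ℝ) / (2 * n) ≤ advRisk f (1 / (n : ℝ)) := by
  have hn' : (0 : ℝ) < n := by exact_mod_cast hn
  set A := {x ∈ Set.Icc (-1 : ℝ) 1 | ∃ y : ℝ, |y - x| ≤ 1 / (n : ℝ) ∧ f y ≤ 0} with hA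
  have hsub : (⋃ j ∈ J, Set.Ico (-1 + (j : ℝ) / n) (-1 + ((j : ℝ) + 1) / n)) ⊆ A := by
    intro x hx
    simp only [Set.mem_iUnion] at hx
    obtain ⟨j, hj, hx⟩ := hx
    obtain ⟨y, hy, hfy⟩ := h j hj
    have hj2 : (j : ℝ) + 1 ≤ 2 * n := by exact_mod_cast hJ j hj
    have h0 : (0 : ℝ) ≤ (j : ℝ) / n := by positivity
    have h2 : ((j : ℝ) + 1) / n ≤ 2 := by rw [div_le_iff₀ hn']; exact hj2
    have h3 : ((j : ℝ) + 1) / n = (j : ℝ) / n + 1 / n := by ring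
    simp only [cell, Set.mem_Icc] at hy
    simp only [Set.mem_Ico] at hx
    refine ⟨⟨by linarith, by linarith⟩, y, ?_, hfy⟩
    rw [abs_le]; constructor <;> linarith
  have hdis : (J : Set ℕ).PairwiseDisjoint
      (fun j : ℕ => Set.Ico (-1 + (j : ℝ) / n) (-1 + ((j : ℝ) + 1) / n)) := by
    have aux : ∀ i j : ℕ, i < j → Disjoint (Set.Ico (-1 + (i : ℝ) / n) (-1 + ((i : ℝ) + 1) / n))
        (Set.Ico (-1 + (j : ℝ) / n) (-1 + ((j : ℝ) + 1) / n)) := by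
      intro i j hij
      rw [Set.disjoint_left]
      intro x h1 h2
      have : ((i : ℝ) + 1) / n ≤ (j : ℝ) / n := by
        apply div_le_div_of_nonneg_right _ hn'.le
        exact_mod_cast hij
      simp only [Set.mem_Ico] at h1 h2
      linarith
    intro i _ j _ hij
    rcases lt_or_gt_of_ne hij with h | h
    · exact aux i j h
    · exact (aux j i h).symm
  have hvol : volume (⋃ j ∈ J, Set.Ico (-1 + (j : ℝ) / n) (-1 + ((j : ℝ) + 1) / n))
      = ENNReal.ofReal (J.card / n) := by
    rw [measure_biUnion_finset hdis (fun _ _ => measurableSet_Ico)]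
    simp only [Real.volume_Ico]
    have : ∀ j ∈ J, ENNReal.ofReal (-1 + ((j : ℝ) + 1) / n - (-1 + (j : ℝ) / n))
        = ENNReal.ofReal (1 / n) := by
      intro j _; congr 1; ring
    rw [Finset.sum_congr rfl this, Finset.sum_const, nsmul_eq_mul, div_eq_mul_one_div (J.card : ℝ),
      ENNReal.ofReal_mul (by positivity)]
    simp
  have hfin : volume A ≠ ⊤ := by
    refine ne_top_of_le_ne_top ?_ (measure_mono (fun x hx => hx.1) : volume A ≤ volume (Set.Icc (-1 : ℝ) 1))
    simp
  have h1 : (J.card : ℝ) / n ≤ (volume A).toReal := by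
    rw [← ENNReal.toReal_ofReal (by positivity : (0 : ℝ) ≤ (J.card : ℝ) / n), ← hvol]
    exact ENNReal.toReal_mono hfin (measure_mono hsub)
  rw [advRisk, ← hA]
  have : (J.card : ℝ) / (2 * n) = (J.card : ℝ) / n / 2 := by field_simp
  rw [this]
  linarith

open Classical in
lemma risk_event (n : ℕ) (hn : 0 < n) (f g : ℝ → ℝ) (δ : ℝ)
    (hf : ∀ j < 2 * n, ∃ y ∈ cell n j, f y ≤ 0)
    (h : δ < |advRisk g (1 / (n : ℝ)) - advRisk f (1 / (n : ℝ))|) :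
    δ * (2 * n) < ((Finset.univ.filter (fun j : Fin (2 * n) => ∀ y ∈ cell n j, 0 < g y)).card : ℝ) := by
  have hn' : (0 : ℝ) < n := by exact_mod_cast hn
  have h1 := advRisk_ge n hn f (Finset.range (2 * n)) (by simp) (by simpa using hf)
  rw [Finset.card_range] at h1
  have h2 : (((2 * n : ℕ) : ℝ)) / (2 * n) = 1 := by push_cast; field_simp
  rw [h2] at h1
  have h3 := advRisk_le_one f (1 / (n : ℝ))
  have h4 := advRisk_le_one g (1 / (n : ℝ))
  rw [le_antisymm h3 h1, abs_of_nonpos (by linarith)] at h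
  set G := Finset.univ.filter (fun j : Fin (2 * n) => ∀ y ∈ cell n j, 0 < g y) with hG
  have h5 := advRisk_ge n hn g (Gᶜ.map Fin.valEmbedding) (by
    intro j hj
    simp only [Finset.mem_map] at hj
    obtain ⟨a, _, rfl⟩ := hj
    exact a.2) (by
    intro j hj
    simp only [Finset.mem_map] at hj
    obtain ⟨a, ha, rfl⟩ := hj
    simp only [hG, Finset.mem_compl, Finset.mem_filter, Finset.mem_univ, true_and] at ha
    push Not at ha
    exact ha)
  rw [Finset.card_map, Finset.card_compl, Fintype.card_fin,
    Nat.cast_sub (by simpa using Finset.card_le_univ G)] at h5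
  rw [div_le_iff₀ (by positivity)] at h5
  push_cast at h5
  nlinarith

lemma bilevel_eq (n B : ℕ) (q : ℝ) : bilevelLam n B q =
    lam2 B ((n : ℝ) ^ (-q) * (B : ℝ)) ((1 - (n : ℝ) ^ (-q)) * (B : ℝ) / ((B : ℝ) - 1)) := rfl

lemma lam2_pos (B : ℕ) (l1 lL : ℝ) (h1 : 0 < l1) (hL : 0 < lL) (j : Fin B) : 0 < lam2 B l1 lL j := by
  rw [lam2]; split_ifs <;> assumption

lemma fhat_formula (n K B : ℕ) (hn : 0 < n) (hK : 0 < K) (hB : B = 2 * (n * K) + 1) (l1 lL : ℝ)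
    (h1 : 0 < l1) (hL : 0 < lL) (α : Fin B → ℝ) (hα : IsMinInterp n B (lam2 B l1 lL) α) (x : ℝ) :
    ∑ j, α j * phiF B x j = kbar n K l1 lL x / (l1 / 2 + lL * K) := by
  have hn' : (0 : ℝ) < n := by exact_mod_cast hn
  set κ := l1 / 2 + lL * K with hκ
  have hκ0 : 0 < κ := by positivity
  set lam := lam2 B l1 lL with hlam
  have hpos : ∀ j, 0 < lam j := lam2_pos B l1 lL h1 hL
  let αs : Fin B → ℝ := fun j => (n * κ)⁻¹ * ∑ a : Fin n, lam j * phiF B (xtr n a) j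
  have hs : ∀ y, ∑ j, αs j * phiF B y j = kbar n K l1 lL y / κ := by
    intro y
    have := mean_kernel n K B hn hB l1 lL y
    rw [Finset.sum_comm] at this
    simp only [αs, mul_assoc, Finset.sum_mul, ← Finset.mul_sum] at this ⊢
    rw [this]
    field_simp
  have hsi : Interpolates n B αs := by
    intro i
    rw [hs, kbar_train n K hn, ← hκ, div_self hκ0.ne']
  have hc : ∀ β, Interpolates n B β → ∑ j, β j * αs j / lam j = 1 / κ := by
    intro β hβ
    have : ∑ j, β j * αs j / lam j
        = (n * κ)⁻¹ * ∑ a : Fin n, ∑ j, β j * phiF B (xtr n a) j := by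
      rw [Finset.sum_comm, Finset.mul_sum]
      refine Finset.sum_congr rfl fun j _ => ?_
      simp only [αs, ← Finset.mul_sum]
      have := (hpos j).ne'
      field_simp
    rw [this, Finset.sum_congr rfl (fun a _ => hβ a)]
    simp
    field_simp
  have hle : ∑ j, (α j - αs j) ^ 2 / lam j ≤ 0 := by
    have e : ∑ j, (α j - αs j) ^ 2 / lam j = ∑ j, (α j) ^ 2 / lam j
        - 2 * ∑ j, α j * αs j / lam j + ∑ j, αs j * αs j / lam j := by
      rw [Finset.mul_sum, ← Finset.sum_sub_distrib, ← Finset.sum_add_distrib]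
      refine Finset.sum_congr rfl fun j _ => ?_
      ring
    have := hα.2 αs hsi
    have h3 := hc α hα.1
    have h4 := hc αs hsi
    simp only [sq] at this
    simp only [sq] at e
    simp only [sq]
    linarith
  have hz : ∀ j, α j = αs j := by
    have h0 : ∑ j, (α j - αs j) ^ 2 / lam j = 0 :=
      le_antisymm hle (Finset.sum_nonneg fun j _ => div_nonneg (sq_nonneg _) (hpos j).le)
    rw [Finset.sum_eq_zero_iff_of_nonneg
      (fun j _ => div_nonneg (sq_nonneg _) (hpos j).le)] at h0
    intro j
    have := h0 j (Finset.mem_univ j)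
    rw [div_eq_zero_iff] at this
    rcases this with h | h
    · exact sub_eq_zero.1 (pow_eq_zero_iff (by norm_num) |>.1 h)
    · exact absurd h (hpos j).ne'
  rw [← hs x]
  simp only [hz]

lemma m_dip (n K : ℕ) (hn : 0 < n) (hK : 0 < K) (l1 lL : ℝ)
    (h1 : 0 < l1) (hL : 0 < lL) (hs : l1 / 2 ≤ lL * K / 20) (j : ℕ) :
    kbar n K l1 lL (dip n K j) / (l1 / 2 + lL * K) ≤ - 1 / 10 := by
  have hK' : (0 : ℝ) < K := by exact_mod_cast hK
  have : 0 < lL * K := by positivity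
  rw [div_le_iff₀ (by positivity)]
  have := kbar_dip n K hn hK j l1 lL hL.le
  linarith


open MeasureTheory Filter ProbabilityTheory

lemma gauss_orth {J κ : Type*} [Fintype J] [Fintype κ] [DecidableEq κ] (v : NNReal)
    (u : κ → J → ℝ) (hu : ∀ k l, ∑ j, u k j * u l j = if k = l then 1 else 0) :
    MeasurePreserving (fun (x : J → ℝ) k => ∑ j, x j * u k j)
      (Measure.pi fun _ => gaussianReal 0 v) (Measure.pi fun _ => gaussianReal 0 v) := by
  refine gauss_map (fun _ => v) (fun _ => v) _ (by fun_prop) (fun c j => ∑ k, c k * u k j) ?_ ?_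
  · intro x c
    simp only [Finset.sum_mul, Finset.mul_sum]
    rw [Finset.sum_comm]
    refine Finset.sum_congr rfl fun j _ => Finset.sum_congr rfl fun k _ => by ring
  · intro c
    rw [← Finset.mul_sum, ← Finset.mul_sum]
    congr 1
    have : ∀ j, (∑ k, c k * u k j) ^ 2 = ∑ k, ∑ l, c k * c l * (u k j * u l j) := by
      intro j
      rw [sq, Finset.sum_mul_sum]
      refine Finset.sum_congr rfl fun j _ => Finset.sum_congr rfl fun k _ => by ring
    simp_rw [this]
    rw [Finset.sum_comm]
    refine Finset.sum_congr rfl fun k _ => ?_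
    rw [Finset.sum_comm]
    simp_rw [← Finset.mul_sum, hu]
    simp [sq]

lemma gauss_orth_prod {I J κ : Type*} [Fintype I] [Fintype J] [Fintype κ] [DecidableEq I]
    [DecidableEq κ] (v : NNReal)
    (u : κ → J → ℝ) (hu : ∀ k l, ∑ j, u k j * u l j = if k = l then 1 else 0) :
    MeasurePreserving (fun (x : I × J → ℝ) (ik : I × κ) => ∑ j, x (ik.1, j) * u ik.2 j)
      (Measure.pi fun _ => gaussianReal 0 v) (Measure.pi fun _ => gaussianReal 0 v) := by
  have := gauss_orth (J := I × J) (κ := I × κ) v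
    (fun ik il => if ik.1 = il.1 then u ik.2 il.2 else 0) (by
      rintro ⟨i, k⟩ ⟨i', l⟩
      simp only [Fintype.sum_prod_type, Prod.mk.injEq]
      by_cases h : i = i'
      · subst h
        simp only [true_and]
        rw [← hu k l, Finset.sum_eq_single i]
        · simp
        · intro b _ hb; simp [Ne.symm hb]
        · simp
      · simp only [h, false_and, if_false]
        apply Finset.sum_eq_zero
        intro b _
        apply Finset.sum_eq_zero
        intro j _
        by_cases hb : i = b
        · have : ¬ i' = b := fun h' => h (hb.trans h'.symm)
          simp [this]
        · simp [hb])
  convert this using 2 with x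
  ext ik
  simp only [Fintype.sum_prod_type]
  rw [Finset.sum_eq_single ik.1]
  · simp
  · intro b _ hb; simp [Ne.symm hb]
  · simp

/-- the points of the `B`-grid -/
noncomputable def ypt (K B j s : ℕ) : ℝ := -1 + 2 * (((j * K + s + 1 : ℕ)) : ℝ) / B

lemma ypt_mem (n K B : ℕ) (hn : 0 < n) (hB : B = 2 * (n * K) + 1) (j s : ℕ) (hj2 : j < 2 * n) (hs : s < K) :
    ypt K B j s ∈ cell n j := by
  have hn' : (0 : ℝ) < n := by exact_mod_cast hn
  have hB' : (B : ℝ) = 2 * (n * K) + 1 := by exact_mod_cast hB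
  have hB0 : (0 : ℝ) < B := by rw [hB']; positivity
  have hs' : (s : ℝ) + 1 ≤ K := by exact_mod_cast hs
  have hj : (0 : ℝ) ≤ j := by positivity
  have hs0 : (0 : ℝ) ≤ s := by positivity
  simp only [ypt, cell, Set.mem_Icc, add_le_add_iff_left]
  push_cast
  constructor
  · rw [div_le_div_iff₀ hn' hB0, hB']
    have h1 : (j : ℝ) ≤ 2 * n := by exact_mod_cast hj2.le
    nlinarith [mul_nonneg hn'.le hs0]
  · rw [div_le_div_iff₀ hB0 hn', hB']
    nlinarith [mul_le_mul_of_nonneg_left hs' hn'.le]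

lemma phi_grid (K n B : ℕ) (hB : B = 2 * (n * K) + 1)
    (k l : Fin (2 * n) × Fin K) :
    ∑ j, phiF B (ypt K B k.1 k.2) j * phiF B (ypt K B l.1 l.2) j
      = if k = l then (B : ℝ) / 2 else 0 := by
  have h := phi_kernel B (n * K) hB 1 1 (ypt K B k.1 k.2) (ypt K B l.1 l.2)
  have h1 : ∀ j, lam2 B 1 1 j = 1 := by intro j; simp [lam2]
  simp only [h1, one_mul] at h
  rw [h]
  split_ifs with hkl
  · subst hkl
    simp [hB]
    ring
  · set r : ℤ := (((k.1 : ℕ) * K + (k.2 : ℕ) : ℕ) : ℤ) - (((l.1 : ℕ) * K + (l.2 : ℕ) : ℕ) : ℤ) with hr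
    have hlt : ∀ k : Fin (2 * n) × Fin K, (k.1 : ℕ) * K + (k.2 : ℕ) < 2 * (n * K) := by
      intro k
      have h1 := k.1.2
      have h2 := k.2.2
      have : ((k.1 : ℕ) + 1) * K ≤ 2 * n * K := Nat.mul_le_mul_right _ h1
      nlinarith
    have hne : (k.1 : ℕ) * K + (k.2 : ℕ) ≠ (l.1 : ℕ) * K + (l.2 : ℕ) := by
      intro he
      apply hkl
      have hKpos : 0 < K := lt_of_le_of_lt (Nat.zero_le _) k.2.2
      have a1 : (k.1 : ℕ) = l.1 := by
        have := congrArg (· / K) he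
        simpa [Nat.add_div_of_dvd_right, Nat.mul_add_div, mul_comm _ K, Nat.mul_add_div hKpos,
          Nat.div_eq_of_lt k.2.2, Nat.div_eq_of_lt l.2.2] using this
      have a2 : (k.2 : ℕ) = l.2 := by rw [a1] at he; omega
      exact Prod.ext (Fin.ext a1) (Fin.ext a2)
    have hdvd : ¬ ((2 * (n * K) + 1 : ℕ) : ℤ) ∣ r := by
      intro hd
      have h3 := hlt k
      have h4 := hlt l
      have : r = 0 := by
        apply Int.eq_zero_of_abs_lt_dvd hd
        rw [abs_lt, hr]
        constructor <;> push_cast at * <;> omega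
      omega
    have := grid_orth (n * K) r hdvd
    have e : ypt K B k.1 k.2 - ypt K B l.1 l.2 = 2 * (r : ℝ) / ((2 * (n * K) + 1 : ℕ) : ℝ) := by
      simp only [ypt, hr, hB]
      push_cast
      ring
    rw [e, this]
    norm_num

/-- bad event for case A -/
def badA (n B d j0 : ℕ) : Set (Fin d → Fin B → ℝ) :=
  {W | ∃ J : Finset (Fin (2 * n)), j0 ≤ J.card ∧ ∃ β : Fin d → ℝ,
    ∀ j ∈ J, ∀ y ∈ cell n j, 0 < rfsFun B d W β y}

lemma caseA_iid (n K B d j0 : ℕ) (hn : 0 < n) (hB : B = 2 * (n * K) + 1) (v : NNReal) :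
    (2 : ENNReal) ^ (j0 * K) *
      (Measure.pi fun _ : Fin d => Measure.pi fun _ : Fin B => gaussianReal 0 v) (badA n B d j0)
      ≤ 2 ^ (2 * n) * ((2 * n : ℕ) * K + 1) ^ d := by
  classical
  have hB0 : (0 : ℝ) < B := by rw [hB]; positivity
  set u : Fin (2 * n) × Fin K → Fin B → ℝ := fun k j =>
    phiF B (ypt K B k.1 k.2) j / Real.sqrt (B / 2) with hu
  have horth : ∀ k l, ∑ j, u k j * u l j = if k = l then 1 else 0 := by
    intro k l
    have : ∀ j, u k j * u l j = (phiF B (ypt K B k.1 k.2) j * phiF B (ypt K B l.1 l.2) j) / (B / 2) := by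
      intro j
      simp only [hu]
      rw [div_mul_div_comm, Real.mul_self_sqrt (by positivity)]
    simp_rw [this]
    rw [← Finset.sum_div, phi_grid K n B hB]
    split_ifs
    · exact div_self (by positivity)
    · simp
  have h1 := gauss_orth_prod (I := Fin d) v u horth
  have h2 := pi_uncurry (ι := Fin d) (fun _ : Fin B => gaussianReal 0 v)
  set Ψ : (Fin d → Fin B → ℝ) → (Fin d × (Fin (2 * n) × Fin K) → ℝ) :=
    fun W ik => ∑ j, W ik.1 j * u ik.2 j with hΨ
  have hΨm : Measurable Ψ := by rw [hΨ]; fun_prop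
  have hsub : badA n B d j0 ⊆ Ψ ⁻¹' (coverBad d (2 * n) K j0) := by
    rintro W ⟨J, hJ, β, hβ⟩
    refine ⟨J, hJ, β, fun k hk => ?_⟩
    have := hβ k.1 hk _ (ypt_mem n K B hn hB k.1 k.2 k.1.2 k.2.2)
    have e : ∑ i, β i * Ψ W (i, k) = rfsFun B d W β (ypt K B k.1 k.2) / Real.sqrt (B / 2) := by
      simp only [rfsFun, hΨ, hu, Finset.sum_div, mul_div_assoc]
    rw [e]
    exact div_pos this (Real.sqrt_pos.2 (by positivity))
  have hcm := measurableSet_coverBad d (2 * n) K j0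
  have h3 : (Measure.pi fun _ : Fin d => Measure.pi fun _ : Fin B => gaussianReal 0 v)
      (Ψ ⁻¹' (coverBad d (2 * n) K j0)) =
      (Measure.pi fun _ : Fin d × (Fin (2 * n) × Fin K) => gaussianReal 0 v)
        (coverBad d (2 * n) K j0) := by
    rw [← h2.measure_preimage (hΨm hcm).nullMeasurableSet, ← h1.measure_preimage hcm.nullMeasurableSet]
    rfl
  calc _ ≤ (2 : ENNReal) ^ (j0 * K) * (Measure.pi fun _ : Fin d × (Fin (2 * n) × Fin K) => gaussianReal 0 v)
        (coverBad d (2 * n) K j0) := by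
        rw [← h3]; gcongr
    _ ≤ _ := cover_prob d (2 * n) K j0 v

lemma caseA (n K B d j0 : ℕ) (hn : 0 < n) (hB : B = 2 * (n * K) + 1) (l1 lL : ℝ)
    (h1 : 0 < l1) (hL : l1 ≤ lL) :
    (2 : ENNReal) ^ (j0 * K) *
      (Measure.pi fun _ : Fin d => Measure.pi fun j : Fin B => gaussianReal 0 (lam2 B l1 lL j).toNNReal)
        (badA n B d j0)
      ≤ ((NNReal.sqrt (lL.toNNReal / l1.toNNReal) : NNReal) : ENNReal) ^ d *
        (2 ^ (2 * n) * ((2 * n : ℕ) * K + 1) ^ d) := by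
  set C := NNReal.sqrt (lL.toNNReal / l1.toNNReal)
  have hB0 : 0 < B := by omega
  have hin : (Measure.pi fun j : Fin B => gaussianReal 0 (lam2 B l1 lL j).toNNReal)
      ≤ C • (Measure.pi fun _ : Fin B => gaussianReal 0 lL.toNNReal) := by
    rw [Measure.le_iff]
    intro s _
    have := pi_le_pi (fun j : Fin B => gaussianReal 0 (lam2 B l1 lL j).toNNReal)
      (fun _ : Fin B => gaussianReal 0 lL.toNNReal)
      (fun j => if j = ⟨0, hB0⟩ then C else 1) (by
        intro j
        by_cases hj : j = ⟨0, hB0⟩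
        · subst hj
          simp only [lam2, if_true]
          exact gauss_le _ _ (by simpa using h1) (Real.toNNReal_le_toNNReal hL)
        · have : ¬ j.val = 0 := fun h => hj (Fin.ext h)
          simp [lam2, this, hj]) s
    simpa using this
  have hout := pi_le_pi (fun _ : Fin d => Measure.pi fun j : Fin B => gaussianReal 0 (lam2 B l1 lL j).toNNReal)
      (fun _ : Fin d => (Measure.pi fun _ : Fin B => gaussianReal 0 lL.toNNReal)) (fun _ => C)
      (fun _ => hin) (badA n B d j0)
  have h3 := caseA_iid n K B d j0 hn hB lL.toNNReal
  rw [Finset.prod_const, Finset.card_univ, Fintype.card_fin, ENNReal.coe_pow] at hout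
  set m2 := (Measure.pi fun _ : Fin d => Measure.pi fun _ : Fin B => gaussianReal 0 lL.toNNReal)
    (badA n B d j0)
  calc _ ≤ (2 : ENNReal) ^ (j0 * K) * ((C : ENNReal) ^ d * m2) := by gcongr
    _ = (C : ENNReal) ^ d * ((2 : ENNReal) ^ (j0 * K) * m2) := by ring
    _ ≤ _ := by gcongr


open MeasureTheory Filter ProbabilityTheory

lemma proj_exists {ι J : Type*} [Fintype ι] [Fintype J] (S : ι → J → ℝ) :
    ∃ (D : ℕ) (e : Fin D → J → ℝ), (∀ k l, ∑ j, e k j * e l j = if k = l then 1 else 0) ∧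
      (∀ k a, ∑ j, e k j * S a j = 0) ∧ Fintype.card J ≤ D + Fintype.card ι ∧
      ∀ x : J → ℝ, ∃ c : ι → ℝ, ∀ j, x j - ∑ k, (∑ i, e k i * x i) * e k j = ∑ a, c a * S a j := by
  classical
  let s : ι → EuclideanSpace ℝ J := fun a => WithLp.toLp 2 (S a)
  let U : Submodule ℝ (EuclideanSpace ℝ J) := Submodule.span ℝ (Set.range s)
  let b := stdOrthonormalBasis ℝ Uᗮ
  have hin : ∀ x y : EuclideanSpace ℝ J, inner ℝ x y = ∑ j, x j * y j := by
    intro x y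
    simp [PiLp.inner_apply, mul_comm]
  refine ⟨Module.finrank ℝ Uᗮ, fun k j => (b k : EuclideanSpace ℝ J) j, ?_, ?_, ?_, ?_⟩
  · intro k l
    rw [← hin]
    have := orthonormal_iff_ite.1 b.orthonormal k l
    simpa using this
  · intro k a
    have h1 : s a ∈ U := Submodule.subset_span ⟨a, rfl⟩
    have h2 := (Submodule.mem_orthogonal' U _).1 (b k).2 (s a) h1
    rw [hin] at h2
    exact h2
  · have h1 := U.finrank_add_finrank_orthogonal
    have h2 : Module.finrank ℝ U ≤ Fintype.card ι := finrank_range_le_card s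
    rw [finrank_euclideanSpace] at h1
    omega
  · intro x
    let X : EuclideanSpace ℝ J := WithLp.toLp 2 x
    set Y : EuclideanSpace ℝ J := X - ∑ k, (inner ℝ (b k : EuclideanSpace ℝ J) X) • (b k : EuclideanSpace ℝ J) with hY
    have hYU : Y ∈ U := by
      rw [← Submodule.orthogonal_orthogonal U, Submodule.mem_orthogonal]
      intro z hz
      have hz2 : z = ∑ k, (inner ℝ (b k : EuclideanSpace ℝ J) z) • (b k : EuclideanSpace ℝ J) := by
        have := b.sum_repr' ⟨z, hz⟩
        have h3 := congrArg (Subtype.val) this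
        simpa using h3.symm
      have hk : ∀ k, inner ℝ (b k : EuclideanSpace ℝ J) Y = 0 := by
        intro k
        rw [hY, inner_sub_right, inner_sum]
        have : ∀ l, inner ℝ (b k : EuclideanSpace ℝ J)
            ((inner ℝ (b l : EuclideanSpace ℝ J) X) • (b l : EuclideanSpace ℝ J))
            = if k = l then inner ℝ (b l : EuclideanSpace ℝ J) X else 0 := by
          intro l
          rw [inner_smul_right]
          have := orthonormal_iff_ite.1 b.orthonormal k l
          rw [Submodule.coe_inner] at this
          rw [this]; simp
        simp [this]
      rw [hz2, sum_inner]
      apply Finset.sum_eq_zero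
      intro k _
      rw [inner_smul_left, hk]; simp
    obtain ⟨c, hc⟩ := (Submodule.mem_span_range_iff_exists_fun ℝ).1 hYU
    refine ⟨c, fun j => ?_⟩
    have := congrArg (fun z : EuclideanSpace ℝ J => z j) hc
    simp [hY, hin, s, X] at this
    linarith

/-- squared distance to the span -/
noncomputable def distSq {ι J : Type*} [Fintype ι] [Fintype J] (S : ι → J → ℝ) (x : J → ℝ) : ℝ :=
  ⨅ c : ι → ℝ, ∑ j, (x j - ∑ a, c a * S a j) ^ 2

lemma measurable_distSq {ι J : Type*} [Fintype ι] [Fintype J] :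
    Measurable (fun p : (ι → J → ℝ) × (J → ℝ) => distSq p.1 p.2) := by
  refine measurable_of_Iio fun r => ?_
  have : (fun p : (ι → J → ℝ) × (J → ℝ) => distSq p.1 p.2) ⁻¹' Set.Iio r
      = ⋃ c : ι → ℝ, {p | ∑ j, (p.2 j - ∑ a, c a * p.1 a j) ^ 2 < r} := by
    ext p
    simp only [Set.mem_preimage, Set.mem_Iio, Set.mem_iUnion, Set.mem_ofPred_eq, distSq]
    exact ciInf_lt_iff ⟨0, by rintro _ ⟨c, rfl⟩; exact Finset.sum_nonneg fun _ _ => sq_nonneg _⟩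
  rw [this]
  apply IsOpen.measurableSet
  refine isOpen_iUnion fun c => ?_
  apply isOpen_lt (by fun_prop) (by fun_prop)

lemma distSq_eq {ι J : Type*} [Fintype ι] [Fintype J] (S : ι → J → ℝ) (D : ℕ) (e : Fin D → J → ℝ)
    (he : ∀ k l, ∑ j, e k j * e l j = if k = l then 1 else 0)
    (hS : ∀ k a, ∑ j, e k j * S a j = 0)
    (hx : ∀ x : J → ℝ, ∃ c : ι → ℝ, ∀ j, x j - ∑ k, (∑ i, e k i * x i) * e k j = ∑ a, c a * S a j)
    (x : J → ℝ) : distSq S x = ∑ k, (∑ j, e k j * x j) ^ 2 := by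
  have hn : ∀ t : Fin D → ℝ, ∑ j, (∑ k, t k * e k j) ^ 2 = ∑ k, t k ^ 2 := by
    intro t
    have h1 : ∀ j, (∑ k, t k * e k j) ^ 2 = ∑ k, ∑ l, t k * t l * (e k j * e l j) := by
      intro j
      rw [sq, Finset.sum_mul_sum]
      refine Finset.sum_congr rfl fun j _ => Finset.sum_congr rfl fun k _ => by ring
    simp_rw [h1]
    rw [Finset.sum_comm]
    refine Finset.sum_congr rfl fun k _ => ?_
    rw [Finset.sum_comm]
    simp_rw [← Finset.mul_sum, he]
    simp [sq]
  have key : ∀ c : ι → ℝ, ∑ k, (∑ j, e k j * x j) ^ 2 ≤ ∑ j, (x j - ∑ a, c a * S a j) ^ 2 := by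
    intro c
    set y : J → ℝ := fun j => x j - ∑ a, c a * S a j with hy
    have h1 : ∀ k, ∑ j, e k j * x j = ∑ j, e k j * y j := by
      intro k
      simp only [hy, mul_sub, Finset.sum_sub_distrib, Finset.mul_sum]
      rw [Finset.sum_comm]
      have : ∀ a, ∑ j, e k j * (c a * S a j) = 0 := by
        intro a
        have : ∑ j, e k j * (c a * S a j) = c a * ∑ j, e k j * S a j := by
          rw [Finset.mul_sum]; refine Finset.sum_congr rfl fun j _ => by ring
        rw [this, hS, mul_zero]
      simp [this]
    simp_rw [h1]
    set t : Fin D → ℝ := fun k => ∑ j, e k j * y j with ht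
    have h2 : 0 ≤ ∑ j, (y j - ∑ k, t k * e k j) ^ 2 := Finset.sum_nonneg fun _ _ => sq_nonneg _
    have h3 : ∑ j, (y j - ∑ k, t k * e k j) ^ 2 = ∑ j, y j ^ 2 - 2 * ∑ j, y j * ∑ k, t k * e k j
        + ∑ j, (∑ k, t k * e k j) ^ 2 := by
      rw [Finset.mul_sum, ← Finset.sum_sub_distrib, ← Finset.sum_add_distrib]
      refine Finset.sum_congr rfl fun j _ => by ring
    have h4 : ∑ j, y j * ∑ k, t k * e k j = ∑ k, t k ^ 2 := by
      simp only [Finset.mul_sum]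
      rw [Finset.sum_comm]
      refine Finset.sum_congr rfl fun k _ => ?_
      rw [sq]
      conv_rhs => rw [ht]
      simp only [Finset.mul_sum, Finset.sum_mul]
      simp only [ht, Finset.mul_sum, Finset.sum_mul]
      rw [Finset.sum_comm]
      refine Finset.sum_congr rfl fun j _ => Finset.sum_congr rfl fun i _ => by ring
    rw [h4, hn] at h3
    linarith
  apply le_antisymm
  · obtain ⟨c, hc⟩ := hx x
    have h1 : distSq S x ≤ ∑ j, (x j - ∑ a, c a * S a j) ^ 2 :=
      ciInf_le ⟨0, by rintro _ ⟨c, rfl⟩; exact Finset.sum_nonneg fun _ _ => sq_nonneg _⟩ c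
    refine h1.trans_eq ?_
    rw [← hn]
    refine Finset.sum_congr rfl fun j _ => ?_
    rw [← hc j]; ring
  · exact le_ciInf key

lemma cheb_pi {ι : Type*} [Fintype ι] (μ : ι → Measure ℝ) [∀ i, IsProbabilityMeasure (μ i)]
    (X : ι → ℝ → ℝ) (hX : ∀ i, MemLp (X i) 2 (μ i)) (t : ℝ) (ht : 0 < t) :
    Measure.pi μ {x | t ≤ |∑ i, X i (x i) - ∑ i, ∫ y, X i y ∂(μ i)|}
      ≤ ENNReal.ofReal ((∑ i, Var[X i; μ i]) / t ^ 2) := by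
  have hm : ∀ i, MemLp (fun x : ι → ℝ => X i (x i)) 2 (Measure.pi μ) := fun i =>
    (hX i).comp_measurePreserving (measurePreserving_eval μ i)
  have h1 : MemLp (∑ i, fun x : ι → ℝ => X i (x i)) 2 (Measure.pi μ) :=
    memLp_finsetSum' _ (fun i _ => hm i)
  have h2 := meas_ge_le_variance_div_sq h1 ht
  rw [variance_sum_pi hX] at h2
  have h3 : (Measure.pi μ)[∑ i, fun x : ι → ℝ => X i (x i)] = ∑ i, ∫ y, X i y ∂(μ i) := by
    simp only [Finset.sum_apply]
    rw [integral_finsetSum _ (fun i _ => (hm i).integrable (by norm_num))]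
    refine Finset.sum_congr rfl fun i _ => ?_
    have := (measurePreserving_eval μ i).map_eq
    rw [← this, integral_map (measurable_pi_apply i).aemeasurable]
    rw [this]; exact (hX i).aestronglyMeasurable
  rw [h3] at h2
  simpa using h2

/-- variance of the square of a standard normal -/
noncomputable def Vsq : ℝ := Var[fun x => x ^ 2; gaussianReal 0 1]

lemma memLp_sq (v : NNReal) : MemLp (fun x : ℝ => x ^ 2) 2 (gaussianReal 0 v) := by
  have h := memLp_id_gaussianReal' (μ := 0) (v := v) 4 (by norm_num)
  have h2 := MemLp.norm_rpow_div h 2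
  have e : (4 : ENNReal) / 2 = 2 := by
    rw [show (4 : ENNReal) = 2 * 2 by norm_num, ENNReal.mul_div_cancel_right (by norm_num) (by norm_num)]
  rw [e] at h2
  simpa using h2

lemma mean_sq (v : NNReal) : ∫ x, x ^ 2 ∂(gaussianReal 0 v) = v := by
  have h := variance_id_gaussianReal (μ := 0) (v := v)
  rw [variance_eq_sub (memLp_id_gaussianReal' 2 (by norm_num))] at h
  simpa using h

lemma var_sq (v : NNReal) : Var[fun x => x ^ 2; gaussianReal 0 v] = v ^ 2 * Vsq := by
  have h := gaussianReal_map_const_mul (μ := 0) (v := 1) (Real.sqrt v)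
  have h1 : gaussianReal 0 v = (gaussianReal 0 1).map (fun x => Real.sqrt v * x) := by
    rw [h]; congr 1
    · simp
    · ext; simp
  rw [h1, variance_map (by fun_prop) (by fun_prop)]
  have : ((fun x : ℝ => x ^ 2) ∘ fun x => Real.sqrt v * x) = fun x => (v : ℝ) * x ^ 2 := by
    ext x; simp [mul_pow]
  rw [this, variance_const_mul, Vsq]

lemma Vsq_nonneg : 0 ≤ Vsq := variance_nonneg _ _


open MeasureTheory Filter ProbabilityTheory

/-- polarization of `distSq` -/
noncomputable def polar {ι J : Type*} [Fintype ι] [Fintype J] (S : ι → J → ℝ) (x y : J → ℝ) : ℝ :=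
  (distSq S (x + y) - distSq S (x - y)) / 4

lemma measurable_polar {ι J : Type*} [Fintype ι] [Fintype J] :
    Measurable (fun p : (ι → J → ℝ) × ((J → ℝ) × (J → ℝ)) => polar p.1 p.2.1 p.2.2) := by
  have h1 : Measurable (fun p : (ι → J → ℝ) × ((J → ℝ) × (J → ℝ)) => distSq p.1 (p.2.1 + p.2.2)) :=
    measurable_distSq.comp (g := fun p : (ι → J → ℝ) × (J → ℝ) => distSq p.1 p.2)
      (f := fun p : (ι → J → ℝ) × ((J → ℝ) × (J → ℝ)) => (p.1, p.2.1 + p.2.2)) (by fun_prop)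
  have h2 : Measurable (fun p : (ι → J → ℝ) × ((J → ℝ) × (J → ℝ)) => distSq p.1 (p.2.1 - p.2.2)) :=
    measurable_distSq.comp (g := fun p : (ι → J → ℝ) × (J → ℝ) => distSq p.1 p.2)
      (f := fun p : (ι → J → ℝ) × ((J → ℝ) × (J → ℝ)) => (p.1, p.2.1 - p.2.2)) (by fun_prop)
  exact (h1.sub h2).div_const 4

lemma polar_eq {ι J : Type*} [Fintype ι] [Fintype J] (S : ι → J → ℝ) (D : ℕ) (e : Fin D → J → ℝ)
    (he : ∀ k l, ∑ j, e k j * e l j = if k = l then 1 else 0)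
    (hS : ∀ k a, ∑ j, e k j * S a j = 0)
    (hx : ∀ x : J → ℝ, ∃ c : ι → ℝ, ∀ j, x j - ∑ k, (∑ i, e k i * x i) * e k j = ∑ a, c a * S a j)
    (x y : J → ℝ) : polar S x y = ∑ k, (∑ j, e k j * x j) * (∑ j, e k j * y j) := by
  rw [polar, distSq_eq S D e he hS hx, distSq_eq S D e he hS hx, ← Finset.sum_sub_distrib,
    Finset.sum_div]
  refine Finset.sum_congr rfl fun k _ => ?_
  simp only [Pi.add_apply, Pi.sub_apply, mul_add, mul_sub, Finset.sum_add_distrib,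
    Finset.sum_sub_distrib]
  ring

lemma prob_fixed1 (n d : ℕ) (hnd : 2 * n ≤ d) (hd : 0 < d) (S : Fin n → Fin d → ℝ) (v : NNReal)
    (hv : 0 < v) :
    (Measure.pi fun _ : Fin d => gaussianReal 0 v) {a | distSq S a < v * d / 4}
      ≤ ENNReal.ofReal (8 * Vsq / d) := by
  obtain ⟨D, e, he, hS, hD, hx⟩ := proj_exists S
  simp only [Fintype.card_fin] at hD
  have hD2 : (d : ℝ) ≤ 2 * D := by
    have : d ≤ 2 * D := by omega
    exact_mod_cast this
  have hd' : (0 : ℝ) < d := by exact_mod_cast hd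
  have hD0 : (0 : ℝ) < D := by linarith
  have hv' : (0 : ℝ) < v := by exact_mod_cast hv
  have h1 := gauss_orth v e he
  have h2 := cheb_pi (fun _ : Fin D => gaussianReal 0 v) (fun _ x => x ^ 2) (fun _ => memLp_sq v)
    (v * D / 2) (by positivity)
  have hms : MeasurableSet {x : Fin D → ℝ | (v * D / 2 : ℝ) ≤
      |∑ i, (x i) ^ 2 - ∑ _i : Fin D, ∫ y, y ^ 2 ∂(gaussianReal 0 v)|} :=
    measurableSet_le (by fun_prop) (by fun_prop)
  calc _ ≤ (Measure.pi fun _ : Fin d => gaussianReal 0 v)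
        ((fun (x : Fin d → ℝ) k => ∑ j, x j * e k j) ⁻¹' {x : Fin D → ℝ | (v * D / 2 : ℝ) ≤
      |∑ i, (x i) ^ 2 - ∑ _i : Fin D, ∫ y, y ^ 2 ∂(gaussianReal 0 v)|}) := by
        apply measure_mono
        intro a ha
        simp only [Set.mem_ofPred_eq, Set.mem_preimage] at ha ⊢
        rw [distSq_eq S D e he hS hx] at ha
        simp only [mul_comm (e _ _)] at ha
        rw [mean_sq]
        simp only [Finset.sum_const, Finset.card_univ, Fintype.card_fin, nsmul_eq_mul]
        rw [abs_sub_comm]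
        refine le_trans ?_ (le_abs_self _)
        have : (v : ℝ) * d ≤ v * (2 * D) := mul_le_mul_of_nonneg_left hD2 hv'.le
        linarith
    _ ≤ _ := by
        rw [h1.measure_preimage hms.nullMeasurableSet]
        refine h2.trans (ENNReal.ofReal_le_ofReal ?_)
        rw [var_sq]
        simp only [Finset.sum_const, Finset.card_univ, Fintype.card_fin, nsmul_eq_mul]
        have : (D : ℝ) * ((v : ℝ) ^ 2 * Vsq) / (v * D / 2) ^ 2 = 4 * Vsq / D := by
          field_simp; norm_num
        rw [this, div_le_div_iff₀ hD0 hd']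
        nlinarith [mul_le_mul_of_nonneg_left hD2 Vsq_nonneg]

lemma prob_fixed2 (n d : ℕ) (S : Fin n → Fin d → ℝ) (a : Fin d → ℝ) (v : NNReal) (s : ℝ)
    (hs : s ^ 2 ≤ 1) (hQ : 0 < distSq S a) :
    (Measure.pi fun _ : Fin d => gaussianReal 0 v)
      {b | distSq S a / 10 < |polar S a (s • b)|}
      ≤ ENNReal.ofReal (100 * v / distSq S a) := by
  obtain ⟨D, e, he, hS, hD, hx⟩ := proj_exists S
  set w : Fin d → ℝ := fun j => s * ∑ k, (∑ i, e k i * a i) * e k j with hw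
  have hpol : ∀ b, polar S a (s • b) = ∑ j, w j * b j := by
    intro b
    rw [polar_eq S D e he hS hx]
    simp only [hw, Finset.sum_mul, Finset.mul_sum, Pi.smul_apply, smul_eq_mul]
    conv_rhs => rw [Finset.sum_comm]
    refine Finset.sum_congr rfl fun k _ => ?_
    refine Finset.sum_congr rfl fun i _ => Finset.sum_congr rfl fun j _ => by ring
  have hw2 : ∑ j, w j ^ 2 = s ^ 2 * distSq S a := by
    rw [distSq_eq S D e he hS hx]
    simp only [hw, mul_pow, ← Finset.mul_sum]
    congr 1
    have h1 : ∀ j, (∑ k, (∑ i, e k i * a i) * e k j) ^ 2 =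
        ∑ k, ∑ l, (∑ i, e k i * a i) * (∑ i, e l i * a i) * (e k j * e l j) := by
      intro j
      rw [sq, Finset.sum_mul_sum]
      refine Finset.sum_congr rfl fun j _ => Finset.sum_congr rfl fun k _ => by ring
    simp_rw [h1]
    rw [Finset.sum_comm]
    refine Finset.sum_congr rfl fun k _ => ?_
    rw [Finset.sum_comm]
    simp_rw [← Finset.mul_sum, he]
    simp [sq]
  set Q := distSq S a with hQd
  have h2 := cheb_pi (fun _ : Fin d => gaussianReal 0 v) (fun j x => w j * x)
    (fun j => (memLp_id_gaussianReal' 2 (by norm_num)).const_mul (w j)) (Q / 10) (by positivity)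
  have hm0 : ∀ j, ∫ y, w j * y ∂(gaussianReal 0 v) = 0 := by
    intro j
    rw [integral_const_mul, integral_id_gaussianReal, mul_zero]
  have hv0 : ∀ j, Var[fun y => w j * y; gaussianReal 0 v] = w j ^ 2 * v := by
    intro j
    rw [variance_const_mul, variance_fun_id_gaussianReal]
  simp only [hm0, hv0] at h2
  refine le_trans (measure_mono ?_) (h2.trans (ENNReal.ofReal_le_ofReal ?_))
  · intro b hb
    simp only [Set.mem_ofPred_eq] at hb ⊢
    rw [hpol] at hb
    simpa using hb.le
  · rw [← Finset.sum_mul, hw2]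
    have : s ^ 2 * Q * v / (Q / 10) ^ 2 = s ^ 2 * (100 * v / Q) := by field_simp; norm_num
    rw [this]
    have h0 : 0 ≤ 100 * (v : ℝ) / Q := by positivity
    nlinarith

/-- bad event -/
def badB (n d : ℕ) (v : ℝ) : Set ((Fin n → Fin d → ℝ) × ((Fin d → ℝ) × (Fin d → ℝ))) :=
  {p | distSq p.1 p.2.1 < v * d / 4} ∪
    {p | v * d / 4 ≤ distSq p.1 p.2.1 ∧ distSq p.1 p.2.1 / 10 < |polar p.1 p.2.1 p.2.2|}

lemma meas_dist' (n d : ℕ) : Measurable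
    (fun p : (Fin n → Fin d → ℝ) × ((Fin d → ℝ) × (Fin d → ℝ)) => distSq p.1 p.2.1) :=
  measurable_distSq.comp (g := fun p : (Fin n → Fin d → ℝ) × (Fin d → ℝ) => distSq p.1 p.2)
      (f := fun p : (Fin n → Fin d → ℝ) × ((Fin d → ℝ) × (Fin d → ℝ)) => (p.1, p.2.1)) (by fun_prop)

lemma meas_badB1 (n d : ℕ) (v : ℝ) : MeasurableSet
    {p : (Fin n → Fin d → ℝ) × ((Fin d → ℝ) × (Fin d → ℝ)) | distSq p.1 p.2.1 < v * d / 4} :=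
  measurableSet_lt (meas_dist' n d) measurable_const

lemma meas_badB2 (n d : ℕ) (v : ℝ) : MeasurableSet
    {p : (Fin n → Fin d → ℝ) × ((Fin d → ℝ) × (Fin d → ℝ)) |
      v * d / 4 ≤ distSq p.1 p.2.1 ∧ distSq p.1 p.2.1 / 10 < |polar p.1 p.2.1 p.2.2|} :=
  (measurableSet_le measurable_const (meas_dist' n d)).inter
    (measurableSet_lt ((meas_dist' n d).div_const 10) (measurable_polar.abs))

lemma meas_badB (n d : ℕ) (v : ℝ) : MeasurableSet (badB n d v) :=
  (meas_badB1 n d v).union (meas_badB2 n d v)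

lemma prob_b {X : Type*} [MeasurableSpace X] (μ : Measure X) [IsProbabilityMeasure μ]
    (n d : ℕ) (hnd : 2 * n ≤ d) (hd : 0 < d) (v σ2 : NNReal) (hv : 0 < v) (s : ℝ) (hs : s ^ 2 ≤ 1)
    (Sf : X → Fin n → Fin d → ℝ) (hSf : Measurable Sf) :
    (μ.prod ((Measure.pi fun _ : Fin d => gaussianReal 0 v).prod
      (Measure.pi fun _ : Fin d => gaussianReal 0 σ2)))
      ((fun p : X × ((Fin d → ℝ) × (Fin d → ℝ)) => (Sf p.1, (p.2.1, s • p.2.2))) ⁻¹' badB n d v)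
      ≤ ENNReal.ofReal (8 * Vsq / d) + ENNReal.ofReal (400 * σ2 / (v * d)) := by
  have hv' : (0 : ℝ) < v := by exact_mod_cast hv
  have hd' : (0 : ℝ) < d := by exact_mod_cast hd
  have hm : Measurable (fun p : X × ((Fin d → ℝ) × (Fin d → ℝ)) => (Sf p.1, (p.2.1, s • p.2.2))) := by
    fun_prop
  rw [badB, Set.preimage_union]
  refine (measure_union_le _ _).trans (add_le_add ?_ ?_)
  · refine prod_le_of_section _ _ _ (hm (meas_badB1 n d v)) _ fun x => ?_
    have h := prob_fixed1 n d hnd hd (Sf x) v hv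
    have e : (Prod.mk x ⁻¹' ((fun p : X × ((Fin d → ℝ) × (Fin d → ℝ)) => (Sf p.1, (p.2.1, s • p.2.2))) ⁻¹'
        {p | distSq p.1 p.2.1 < v * d / 4})) = {a | distSq (Sf x) a < v * d / 4} ×ˢ Set.univ := by
      ext p; simp
    rw [e, Measure.prod_prod]
    simpa using h
  · refine prod_le_of_section _ _ _ (hm (meas_badB2 n d v)) _ fun x => ?_
    refine prod_le_of_section _ _ _ (measurable_prodMk_left (hm (meas_badB2 n d v))) _ fun a => ?_
    by_cases hQ : v * d / 4 ≤ distSq (Sf x) a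
    · have hQ0 : 0 < distSq (Sf x) a := lt_of_lt_of_le (by positivity) hQ
      refine le_trans (measure_mono ?_) ((prob_fixed2 n d (Sf x) a σ2 s hs hQ0).trans
        (ENNReal.ofReal_le_ofReal ?_))
      · intro b hb
        exact hb.2
      · have h3 : 0 < (v : ℝ) * d := by positivity
        rw [div_le_div_iff₀ hQ0 h3]
        have : (0 : ℝ) ≤ σ2 := σ2.2
        nlinarith
    · have e : (Prod.mk a ⁻¹' (Prod.mk x ⁻¹' ((fun p : X × ((Fin d → ℝ) × (Fin d → ℝ)) =>
          (Sf p.1, (p.2.1, s • p.2.2))) ⁻¹' {p | v * d / 4 ≤ distSq p.1 p.2.1 ∧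
            distSq p.1 p.2.1 / 10 < |polar p.1 p.2.1 p.2.2|}))) = ∅ := by
        ext b
        simp only [Set.mem_preimage, Set.mem_ofPred_eq, Set.mem_empty_iff_false, iff_false]
        exact fun h => hQ h.1
      rw [e]; simp


open MeasureTheory Filter ProbabilityTheory

lemma row_dual {J : Type*} [Fintype J] (lam f w ζ c : J → ℝ) (t s a b : ℝ) :
    ∑ j, (ζ j + lam j * ((a - ∑ l, ζ l * f l) * t⁻¹ * f j + (b - ∑ l, ζ l * w l) * s⁻¹ * w j)) * c j
    = ∑ j, ζ j * (c j - (∑ l, lam l * f l * c l) * t⁻¹ * f j - (∑ l, lam l * w l * c l) * s⁻¹ * w j)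
      + (a * ((∑ l, lam l * f l * c l) * t⁻¹) + b * ((∑ l, lam l * w l * c l) * s⁻¹)) := by
  set p := ∑ l, lam l * f l * c l with hp
  set r := ∑ l, lam l * w l * c l with hr
  set zf := ∑ l, ζ l * f l with hzf
  set zw := ∑ l, ζ l * w l with hzw
  have h1 : ∑ j, (ζ j + lam j * ((a - zf) * t⁻¹ * f j + (b - zw) * s⁻¹ * w j)) * c j
      = ∑ j, ζ j * c j + (a - zf) * t⁻¹ * p + (b - zw) * s⁻¹ * r := by
    rw [hp, hr, Finset.mul_sum, Finset.mul_sum, ← Finset.sum_add_distrib, ← Finset.sum_add_distrib]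
    refine Finset.sum_congr rfl fun j _ => by ring
  have h2 : ∑ j, ζ j * (c j - p * t⁻¹ * f j - r * s⁻¹ * w j)
      = ∑ j, ζ j * c j - p * t⁻¹ * zf - r * s⁻¹ * zw := by
    rw [hzf, hzw, Finset.mul_sum, Finset.mul_sum, ← Finset.sum_sub_distrib, ← Finset.sum_sub_distrib]
    refine Finset.sum_congr rfl fun j _ => by ring
  rw [h1, h2]
  ring

lemma row_norm {J : Type*} [Fintype J] (lam f w c : J → ℝ) (t s : ℝ)
    (hff : ∑ j, lam j * f j * f j = t) (hww : ∑ j, lam j * w j * w j = s)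
    (hfw : ∑ j, lam j * f j * w j = 0) :
    ∑ j, lam j * (c j - (∑ l, lam l * f l * c l) * t⁻¹ * f j - (∑ l, lam l * w l * c l) * s⁻¹ * w j) ^ 2
      + (t * ((∑ l, lam l * f l * c l) * t⁻¹) ^ 2 + s * ((∑ l, lam l * w l * c l) * s⁻¹) ^ 2)
    = ∑ j, lam j * c j ^ 2 := by
  set p := ∑ l, lam l * f l * c l with hp
  set r := ∑ l, lam l * w l * c l with hr
  have gen : ∀ P R : ℝ, ∑ j, lam j * (c j - P * f j - R * w j) ^ 2
      = ∑ j, lam j * c j ^ 2 - 2 * P * (∑ l, lam l * f l * c l) - 2 * R * (∑ l, lam l * w l * c l)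
        + P ^ 2 * (∑ j, lam j * f j * f j)
        + R ^ 2 * (∑ j, lam j * w j * w j) + 2 * P * R * (∑ j, lam j * f j * w j) := by
    intro P R
    simp only [Finset.mul_sum]
    rw [← Finset.sum_sub_distrib, ← Finset.sum_sub_distrib, ← Finset.sum_add_distrib,
      ← Finset.sum_add_distrib, ← Finset.sum_add_distrib]
    refine Finset.sum_congr rfl fun j _ => ?_
    ring
  have h1 := gen (p * t⁻¹) (r * s⁻¹)
  rw [hff, hww, hfw, ← hp, ← hr] at h1
  rw [h1]
  have e : ∀ z : ℝ, z * z⁻¹ ^ 2 = z⁻¹ := by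
    intro z
    by_cases hz : z = 0
    · simp [hz]
    · field_simp
  have e1 : t * (p * t⁻¹) ^ 2 = p ^ 2 * t⁻¹ := by rw [mul_pow, mul_left_comm, e]
  have e2 : s * (r * s⁻¹) ^ 2 = r ^ 2 * s⁻¹ := by rw [mul_pow, mul_left_comm, e]
  have e3 : (p * t⁻¹) ^ 2 * t = p ^ 2 * t⁻¹ := by rw [mul_comm, e1]
  have e4 : (r * s⁻¹) ^ 2 * s = r ^ 2 * s⁻¹ := by rw [mul_comm, e2]
  rw [e1, e2, e3, e4]
  ring

/-- the row re-randomization map -/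
noncomputable def rowmap (d B : ℕ) (lam f w : Fin B → ℝ) (t s : ℝ)
    (p : ((Fin d × Fin B) → ℝ) × ((Fin d → ℝ) × (Fin d → ℝ))) : Fin d → Fin B → ℝ := fun i j =>
  p.1 (i, j) + lam j * ((p.2.1 i - ∑ l, p.1 (i, l) * f l) * t⁻¹ * f j
    + (p.2.2 i - ∑ l, p.1 (i, l) * w l) * s⁻¹ * w j)

lemma rowmap_mp (d B : ℕ) (lam : Fin B → NNReal) (f w : Fin B → ℝ) (t s : NNReal)
    (hff : ∑ j, (lam j : ℝ) * f j * f j = t) (hww : ∑ j, (lam j : ℝ) * w j * w j = s)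
    (hfw : ∑ j, (lam j : ℝ) * f j * w j = 0) :
    MeasurePreserving (rowmap d B (fun j => lam j) f w t s)
      ((Measure.pi fun ij : Fin d × Fin B => gaussianReal 0 (lam ij.2)).prod
        ((Measure.pi fun _ : Fin d => gaussianReal 0 t).prod
          (Measure.pi fun _ : Fin d => gaussianReal 0 s)))
      (Measure.pi fun _ : Fin d => Measure.pi fun j : Fin B => gaussianReal 0 (lam j)) := by
  let u : (Fin d × Fin B) ⊕ (Fin d ⊕ Fin d) → NNReal :=
    Sum.elim (fun ij => lam ij.2) (Sum.elim (fun _ => t) (fun _ => s))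
  let lr : Fin B → ℝ := fun j => lam j
  have h1 := gauss_map u (fun ij : Fin d × Fin B => lam ij.2)
    (fun x ij => x (.inl ij) + lr ij.2 * ((x (.inr (.inl ij.1)) - ∑ l, x (.inl (ij.1, l)) * f l) * (t : ℝ)⁻¹ * f ij.2
    + (x (.inr (.inr ij.1)) - ∑ l, x (.inl (ij.1, l)) * w l) * (s : ℝ)⁻¹ * w ij.2)) (by fun_prop)
    (fun c => Sum.elim (fun ij => c ij - (∑ l, lr l * f l * c (ij.1, l)) * (t : ℝ)⁻¹ * f ij.2
        - (∑ l, lr l * w l * c (ij.1, l)) * (s : ℝ)⁻¹ * w ij.2)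
      (Sum.elim (fun i => (∑ l, lr l * f l * c (i, l)) * (t : ℝ)⁻¹)
        (fun i => (∑ l, lr l * w l * c (i, l)) * (s : ℝ)⁻¹)))
    (by
      intro x c
      rw [Fintype.sum_sum_type, Fintype.sum_sum_type, Fintype.sum_prod_type, Fintype.sum_prod_type,
        ← Finset.sum_add_distrib, ← Finset.sum_add_distrib]
      refine Finset.sum_congr rfl fun i _ => ?_
      exact row_dual lr f w (fun j => x (.inl (i, j))) (fun j => c (i, j)) t s
        (x (.inr (.inl i))) (x (.inr (.inr i))))
    (by
      intro c
      rw [Fintype.sum_sum_type, Fintype.sum_sum_type, Fintype.sum_prod_type, Fintype.sum_prod_type,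
        ← Finset.sum_add_distrib, ← Finset.sum_add_distrib]
      refine Finset.sum_congr rfl fun i _ => ?_
      exact row_norm lr f w (fun j => c (i, j)) t s hff hww hfw)
  have h2 := pi_uncurry (ι := Fin d) (fun j : Fin B => gaussianReal 0 (lam j))
  have h3 := measurePreserving_sumPiEquivProdPi_symm (fun i => gaussianReal 0 (u i))
  have h4 := measurePreserving_sumPiEquivProdPi_symm
    (fun i : Fin d ⊕ Fin d => gaussianReal 0 (u (.inr i)))
  have h5 := (MeasurePreserving.id (Measure.pi fun ij : Fin d × Fin B => gaussianReal 0 (lam ij.2))).prod h4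
  exact h2.comp (h1.comp (h3.comp h5))

lemma det_bound (n d : ℕ) (hn : 0 < n) (S : Fin n → Fin d → ℝ) (hS0 : ∀ i, ∑ t, S t i = 0)
    (a b : Fin d → ℝ) (c : Fin n → ℝ) (β : Fin d → ℝ)
    (hβ : (∃ β' : Fin d → ℝ, ∀ t, ∑ i, β' i * (S t i + a i) = 1) →
      (∀ t, ∑ i, β i * (S t i + a i) = 1) ∧
      ∀ β' : Fin d → ℝ, (∀ t, ∑ i, β' i * (S t i + a i) = 1) → ∑ i, β i ^ 2 ≤ ∑ i, β' i ^ 2)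
    (hQ : 0 < distSq S a) (hR : |polar S a b| ≤ distSq S a / 10) :
    ∑ i, β i * (b i + ∑ t, c t * (S t i + a i)) ≤ ∑ t, c t + 1 / 10 := by
  have hn' : (0 : ℝ) < n := by exact_mod_cast hn
  obtain ⟨D, e, he, hS, hD, hx⟩ := proj_exists S
  set Q := distSq S a with hQd
  have hQe : Q = ∑ k, (∑ j, e k j * a j) ^ 2 := distSq_eq S D e he hS hx a
  set Pa : Fin d → ℝ := fun i => ∑ k, (∑ j, e k j * a j) * e k i with hPa
  have hPx : ∀ y : Fin d → ℝ, ∑ i, Pa i * y i = ∑ k, (∑ j, e k j * a j) * ∑ i, e k i * y i := by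
    intro y
    simp only [hPa, Finset.sum_mul]
    rw [Finset.sum_comm]
    refine Finset.sum_congr rfl fun k _ => ?_
    rw [Finset.sum_comm]
    simp only [Finset.mul_sum]
    refine Finset.sum_congr rfl fun i _ => ?_
    refine Finset.sum_congr rfl fun j _ => by ring
  have hPS : ∀ t, ∑ i, Pa i * S t i = 0 := by
    intro t; rw [hPx]; simp [hS]
  have hPA : ∑ i, Pa i * a i = Q := by
    rw [hPx, hQe]; refine Finset.sum_congr rfl fun k _ => by ring
  have hPb : ∑ i, Pa i * b i = polar S a b := by
    rw [hPx, polar_eq S D e he hS hx]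
  obtain ⟨g, hg⟩ := hx a
  have hPag : ∀ i, Pa i = a i - ∑ t, g t * S t i := by
    intro i; rw [← hg i]; simp only [hPa]; ring
  -- any interpolator
  have hinterp : ∀ β' : Fin d → ℝ, (∀ t, ∑ i, β' i * (S t i + a i) = 1) → ∑ i, β' i * Pa i = 1 := by
    intro β' h
    have h1 : ∀ t, ∑ i, β' i * S t i = 1 - ∑ i, β' i * a i := by
      intro t
      have := h t
      simp only [mul_add, Finset.sum_add_distrib] at this
      linarith
    have h2 : ∑ t, ∑ i, β' i * S t i = 0 := by
      rw [Finset.sum_comm]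
      apply Finset.sum_eq_zero
      intro i _
      rw [← Finset.mul_sum, hS0, mul_zero]
    rw [Finset.sum_congr rfl (fun t _ => h1 t)] at h2
    simp only [Finset.sum_const, Finset.card_univ, Fintype.card_fin, nsmul_eq_mul] at h2
    have h3 : ∑ i, β' i * a i = 1 := by
      rcases mul_eq_zero.1 h2 with h | h
      · exact absurd h hn'.ne'
      · linarith
    have h4 : ∑ i, β' i * Pa i = ∑ i, β' i * a i - ∑ t, g t * ∑ i, β' i * S t i := by
      simp only [hPag, mul_sub, Finset.sum_sub_distrib, Finset.mul_sum]
      congr 1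
      rw [Finset.sum_comm]
      refine Finset.sum_congr rfl fun t _ => Finset.sum_congr rfl fun i _ => by ring
    rw [h4, h3]
    simp [h1, h3]
  have hPP : ∑ i, Pa i * Pa i = Q := by
    have : ∑ i, Pa i * Pa i = ∑ i, Pa i * a i - ∑ t, g t * ∑ i, Pa i * S t i := by
      conv_lhs => enter [2, i, 2]; rw [hPag]
      simp only [mul_sub, Finset.sum_sub_distrib, Finset.mul_sum]
      congr 1
      rw [Finset.sum_comm]
      refine Finset.sum_congr rfl fun t _ => Finset.sum_congr rfl fun i _ => by ring
    rw [this, hPA]; simp [hPS]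
  have h0 : ∀ t, ∑ i, (Pa i / Q) * (S t i + a i) = 1 := by
    intro t
    have : ∑ i, (Pa i / Q) * (S t i + a i) = (∑ i, Pa i * S t i + ∑ i, Pa i * a i) / Q := by
      rw [← Finset.sum_add_distrib, Finset.sum_div]
      refine Finset.sum_congr rfl fun i _ => by ring
    rw [this, hPS, hPA, zero_add, div_self hQ.ne']
  obtain ⟨hβi, hβm⟩ := hβ ⟨_, h0⟩
  have hle := hβm _ h0
  have hz : ∑ i, (β i - Pa i / Q) ^ 2 = 0 := by
    apply le_antisymm _ (Finset.sum_nonneg fun _ _ => sq_nonneg _)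
    have e1 : ∑ i, (β i - Pa i / Q) ^ 2 = ∑ i, β i ^ 2 - 2 / Q * ∑ i, β i * Pa i
        + (1 / Q ^ 2) * ∑ i, Pa i * Pa i := by
      rw [Finset.mul_sum, Finset.mul_sum, ← Finset.sum_sub_distrib, ← Finset.sum_add_distrib]
      refine Finset.sum_congr rfl fun i _ => by ring
    have e2 : ∑ i, (Pa i / Q) ^ 2 = (1 / Q ^ 2) * ∑ i, Pa i * Pa i := by
      rw [Finset.mul_sum]
      refine Finset.sum_congr rfl fun i _ => by ring
    rw [e1, hinterp β hβi]
    rw [e2] at hle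
    rw [hPP] at hle ⊢
    have e3 : 1 / Q ^ 2 * Q = 1 / Q := by field_simp
    rw [e3] at hle ⊢
    have : 2 / Q = 1 / Q + 1 / Q := by ring
    linarith
  have hβe : ∀ i, β i = Pa i / Q := by
    intro i
    rw [Finset.sum_eq_zero_iff_of_nonneg (fun _ _ => sq_nonneg _)] at hz
    exact sub_eq_zero.1 (pow_eq_zero_iff (by norm_num) |>.1 (hz i (Finset.mem_univ i)))
  have hfin : ∑ i, β i * (b i + ∑ t, c t * (S t i + a i)) = polar S a b / Q + ∑ t, c t := by
    simp only [mul_add (β _), Finset.sum_add_distrib]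
    congr 1
    · rw [← hPb, Finset.sum_div]
      refine Finset.sum_congr rfl fun i _ => by rw [hβe]; ring
    · simp only [Finset.mul_sum]
      rw [Finset.sum_comm]
      refine Finset.sum_congr rfl fun t _ => ?_
      conv_rhs => rw [← mul_one (c t), ← hβi t, Finset.mul_sum]
      refine Finset.sum_congr rfl fun i _ => by ring
  rw [hfin]
  have : polar S a b / Q ≤ 1 / 10 := by
    rw [div_le_iff₀ hQ]
    have := (abs_le.1 hR).2
    linarith
  linarith

lemma decomp {ι J : Type*} [Fintype ι] [Fintype J] (lam : J → ℝ) (hl : ∀ j, 0 < lam j)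
    (φ : ι → J → ℝ) (f : J → ℝ) : ∃ (c : ι → ℝ) (w : J → ℝ), (∀ j, f j = w j + ∑ a, c a * φ a j) ∧
      (∀ a, ∑ j, lam j * φ a j * w j = 0) ∧
      ∑ j, lam j * w j * w j ≤ ∑ j, lam j * f j * f j := by
  obtain ⟨D, e, he, hS, hD, hx⟩ := proj_exists (fun a j => Real.sqrt (lam j) * φ a j)
  obtain ⟨c, hc⟩ := hx (fun j => Real.sqrt (lam j) * f j)
  set t : Fin D → ℝ := fun k => ∑ i, e k i * (Real.sqrt (lam i) * f i) with ht
  have hs : ∀ j, 0 < Real.sqrt (lam j) := fun j => Real.sqrt_pos.2 (hl j)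
  have hss : ∀ j, Real.sqrt (lam j) * Real.sqrt (lam j) = lam j := fun j => Real.mul_self_sqrt (hl j).le
  set w : J → ℝ := fun j => f j - ∑ a, c a * φ a j with hw
  have hw2 : ∀ j, Real.sqrt (lam j) * w j = ∑ k, t k * e k j := by
    intro j
    have := hc j
    simp only [hw, mul_sub, Finset.mul_sum]
    have e1 : ∑ a, c a * (Real.sqrt (lam j) * φ a j) = ∑ a, Real.sqrt (lam j) * (c a * φ a j) :=
      Finset.sum_congr rfl fun a _ => by ring
    rw [← e1]
    linarith
  have horth : ∀ a, ∑ j, lam j * φ a j * w j = 0 := by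
    intro a
    have : ∑ j, lam j * φ a j * w j = ∑ k, t k * ∑ j, e k j * (Real.sqrt (lam j) * φ a j) := by
      simp only [Finset.mul_sum]
      rw [Finset.sum_comm]
      refine Finset.sum_congr rfl fun j _ => ?_
      have : lam j * φ a j * w j = (Real.sqrt (lam j) * φ a j) * (Real.sqrt (lam j) * w j) := by
        rw [← hss j]; rw [hss j]; ring_nf
        rw [Real.sq_sqrt (hl j).le]
        ring
      rw [this, hw2, Finset.mul_sum]
      refine Finset.sum_congr rfl fun k _ => by ring
    rw [this]
    simp [hS]
  refine ⟨c, w, fun j => by simp only [hw]; ring, horth, ?_⟩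
  have h1 : ∑ j, lam j * f j * f j = ∑ j, lam j * w j * w j
      + 2 * ∑ a, c a * (∑ j, lam j * φ a j * w j) + ∑ j, lam j * (∑ a, c a * φ a j) ^ 2 := by
    have e1 : ∑ a, c a * (∑ j, lam j * φ a j * w j) = ∑ j, lam j * w j * ∑ a, c a * φ a j := by
      simp only [Finset.mul_sum]
      rw [Finset.sum_comm]
      refine Finset.sum_congr rfl fun j _ => Finset.sum_congr rfl fun a _ => by ring
    rw [e1, Finset.mul_sum, ← Finset.sum_add_distrib, ← Finset.sum_add_distrib]
    refine Finset.sum_congr rfl fun j _ => ?_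
    have : f j = w j + ∑ a, c a * φ a j := by simp only [hw]; ring
    rw [this]; ring
  simp only [horth, mul_zero, Finset.sum_const_zero, add_zero] at h1
  rw [h1]
  have : 0 ≤ ∑ j, lam j * (∑ a, c a * φ a j) ^ 2 :=
    Finset.sum_nonneg fun j _ => mul_nonneg (hl j).le (sq_nonneg _)
  linarith


open MeasureTheory Filter ProbabilityTheory

/-- the statistics of the weights relevant to one point -/
def statW (n d B : ℕ) (φ : Fin n → Fin B → ℝ) (f w : Fin B → ℝ) (W : Fin d → Fin B → ℝ) :
    (Fin n → Fin d → ℝ) × ((Fin d → ℝ) × (Fin d → ℝ)) :=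
  (fun a i => ∑ j, W i j * (φ a j - f j), (fun i => ∑ j, W i j * f j, fun i => ∑ j, W i j * w j))

lemma measurable_statW (n d B : ℕ) (φ : Fin n → Fin B → ℝ) (f w : Fin B → ℝ) :
    Measurable (statW n d B φ f w) := by
  unfold statW
  fun_prop

lemma rowmap_dual (d B : ℕ) (lam f w c : Fin B → ℝ) (t s : ℝ)
    (p : ((Fin d × Fin B) → ℝ) × ((Fin d → ℝ) × (Fin d → ℝ))) (i : Fin d) :
    ∑ j, rowmap d B lam f w t s p i j * c j
    = ∑ j, p.1 (i, j) * (c j - (∑ l, lam l * f l * c l) * t⁻¹ * f j - (∑ l, lam l * w l * c l) * s⁻¹ * w j)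
      + (p.2.1 i * ((∑ l, lam l * f l * c l) * t⁻¹) + p.2.2 i * ((∑ l, lam l * w l * c l) * s⁻¹)) :=
  row_dual lam f w (fun j => p.1 (i, j)) c t s (p.2.1 i) (p.2.2 i)

lemma caseB_abs (n d B : ℕ) (hn : 0 < n) (hnd : 2 * n ≤ d) (lam : Fin B → NNReal) (hlam : ∀ j, 0 < lam j)
    (φ : Fin n → Fin B → ℝ) (f w : Fin B → ℝ) (κ σ : NNReal) (hf : ∀ j, n * f j = ∑ a, φ a j)
    (hκ : 0 < κ) (hfφ : ∀ a, ∑ j, (lam j : ℝ) * f j * φ a j = κ)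
    (hww : ∑ j, (lam j : ℝ) * w j * w j = σ) (hwφ : ∀ a, ∑ j, (lam j : ℝ) * φ a j * w j = 0) :
    (Measure.pi fun _ : Fin d => Measure.pi fun j : Fin B => gaussianReal 0 (lam j))
      (statW n d B φ f w ⁻¹' badB n d κ)
      ≤ ENNReal.ofReal (8 * Vsq / d) + ENNReal.ofReal (400 * σ / (κ * d)) := by
  have hn' : (n : ℝ) ≠ 0 := by positivity
  have hκ' : (κ : ℝ) ≠ 0 := by exact_mod_cast hκ.ne'
  have hff : ∑ j, (lam j : ℝ) * f j * f j = κ := by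
    have : (n : ℝ) * ∑ j, (lam j : ℝ) * f j * f j = n * κ := by
      calc _ = ∑ j, ∑ a, (lam j : ℝ) * f j * φ a j := by
            rw [Finset.mul_sum]
            refine Finset.sum_congr rfl fun j _ => ?_
            rw [← Finset.mul_sum, ← hf]; ring
        _ = _ := by rw [Finset.sum_comm]; simp [hfφ]
    exact mul_left_cancel₀ hn' this
  have hfw : ∑ j, (lam j : ℝ) * f j * w j = 0 := by
    have : (n : ℝ) * ∑ j, (lam j : ℝ) * f j * w j = n * 0 := by
      calc _ = ∑ j, ∑ a, (lam j : ℝ) * φ a j * w j := by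
            rw [Finset.mul_sum]
            refine Finset.sum_congr rfl fun j _ => ?_
            rw [← Finset.sum_mul, ← Finset.mul_sum, ← hf]; ring
        _ = _ := by rw [Finset.sum_comm]; simp [hwφ]
    exact mul_left_cancel₀ hn' this
  have hwf : ∑ j, (lam j : ℝ) * w j * f j = 0 := by
    rw [← hfw]; exact Finset.sum_congr rfl fun j _ => by ring
  have hmp := rowmap_mp d B lam f w κ σ hff hww hfw
  have hmeas : MeasurableSet (statW n d B φ f w ⁻¹' badB n d κ) :=
    measurable_statW n d B φ f w (meas_badB n d κ)
  rw [← hmp.measure_preimage hmeas.nullMeasurableSet]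
  have hs : ((σ : ℝ) * (σ : ℝ)⁻¹) ^ 2 ≤ 1 := by
    by_cases h : (σ : ℝ) = 0
    · simp [h]
    · rw [mul_inv_cancel₀ h]; norm_num
  have hw0 : (σ : ℝ) = 0 → ∀ j, w j = 0 := by
    intro h j
    rw [h, Finset.sum_eq_zero_iff_of_nonneg] at hww
    · have h2 := hww j (Finset.mem_univ j)
      have h3 : (lam j : ℝ) ≠ 0 := by exact_mod_cast (hlam j).ne'
      rw [mul_assoc] at h2
      rcases mul_eq_zero.1 h2 with h | h
      · exact absurd h h3
      · exact mul_self_eq_zero.1 h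
    · intro j _
      rw [mul_assoc]
      exact mul_nonneg (lam j).2 (mul_self_nonneg _)
  have hd : 0 < d := by omega
  have key := prob_b (Measure.pi fun ij : Fin d × Fin B => gaussianReal 0 (lam ij.2)) n d hnd hd κ σ hκ
    ((σ : ℝ) * (σ : ℝ)⁻¹) hs (fun z a i => ∑ j, z (i, j) * (φ a j - f j)) (by fun_prop)
  refine le_trans (le_of_eq ?_) key
  congr 1
  rw [← Set.preimage_comp]
  congr 1
  funext p
  simp only [Function.comp, statW]
  refine Prod.ext ?_ (Prod.ext ?_ ?_)
  · funext a i
    simp only [rowmap_dual]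
    have e1 : ∑ l, (lam l : ℝ) * f l * (φ a l - f l) = 0 := by
      simp only [mul_sub, Finset.sum_sub_distrib, hfφ, hff, sub_self]
    have e2 : ∑ l, (lam l : ℝ) * w l * (φ a l - f l) = 0 := by
      simp only [mul_sub, Finset.sum_sub_distrib, hwf, sub_zero]
      rw [← hwφ a]; exact Finset.sum_congr rfl fun j _ => by ring
    rw [e1, e2]; simp
  · funext i
    simp only [rowmap_dual]
    rw [hff, hwf, mul_inv_cancel₀ hκ']
    simp
  · funext i
    simp only [rowmap_dual]
    rw [hfw, hww]
    simp only [zero_mul, sub_zero, mul_zero, zero_add, Pi.smul_apply, smul_eq_mul]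
    by_cases h : (σ : ℝ) = 0
    · simp [h, hw0 h]
    · rw [mul_inv_cancel₀ h]; simp

lemma caseB_point (n K B d : ℕ) (hn : 0 < n) (hK : 0 < K) (hB : B = 2 * (n * K) + 1) (hnd : 2 * n ≤ d)
    (l1 lL : ℝ) (h1 : 0 < l1) (hL : 0 < lL) (x : ℝ) (hx : kbar n K l1 lL x / (l1 / 2 + lL * K) ≤ - 1 / 10)
    (βh : (Fin d → Fin B → ℝ) → Fin d → ℝ)
    (hβ : ∀ W : Fin d → Fin B → ℝ, (∃ β, RFSInterpolates n B d W β) →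
        RFSInterpolates n B d W (βh W) ∧
        ∀ β : Fin d → ℝ, RFSInterpolates n B d W β → ∑ i, (βh W i) ^ 2 ≤ ∑ i, (β i) ^ 2) :
    ∃ E : Set (Fin d → Fin B → ℝ), MeasurableSet E ∧ (∀ W, 0 < rfsFun B d W (βh W) x → W ∈ E) ∧
      (Measure.pi fun _ : Fin d => Measure.pi fun j : Fin B => gaussianReal 0 (lam2 B l1 lL j).toNNReal) E
      ≤ ENNReal.ofReal (8 * Vsq / d) + ENNReal.ofReal (400 * n / d) := by
  have hn' : (0 : ℝ) < n := by exact_mod_cast hn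
  have hK' : (0 : ℝ) < K := by exact_mod_cast hK
  have hd' : (0 : ℝ) < d := by exact_mod_cast (show 0 < d by omega)
  set κ := l1 / 2 + lL * K with hκd
  have hκ : 0 < κ := by positivity
  have hl := lam2_pos B l1 lL h1 hL
  set φ : Fin n → Fin B → ℝ := fun a j => phiF B (xtr n a) j with hφ
  obtain ⟨c, w, hc, hw, hwle⟩ := decomp (lam2 B l1 lL) hl φ (phiF B x)
  set f : Fin B → ℝ := fun j => (∑ a, φ a j) / n with hf
  have hfn : ∀ j, n * f j = ∑ a, φ a j := fun j => by simp only [hf]; field_simp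
  have hfx : ∀ y, ∑ j, lam2 B l1 lL j * f j * phiF B y j = kbar n K l1 lL y := by
    intro y
    have := mean_kernel n K B hn hB l1 lL y
    rw [Finset.sum_comm] at this
    have e : ∑ j, lam2 B l1 lL j * f j * phiF B y j
      = (∑ j, ∑ a : Fin n, lam2 B l1 lL j * phiF B (xtr n a) j * phiF B y j) / n := by
      rw [Finset.sum_div]
      refine Finset.sum_congr rfl fun j _ => ?_
      rw [← Finset.sum_mul, ← Finset.mul_sum]
      simp only [hf, hφ]; ring
    rw [e, this]; field_simp
  have hfφ : ∀ a, ∑ j, lam2 B l1 lL j * f j * φ a j = κ := fun a => by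
    rw [hφ]; rw [hfx, kbar_train n K hn]
  have hfw : ∑ j, lam2 B l1 lL j * f j * w j = 0 := by
    have : ∑ j, lam2 B l1 lL j * f j * w j = (∑ a, ∑ j, lam2 B l1 lL j * φ a j * w j) / n := by
      rw [Finset.sum_comm, Finset.sum_div]
      refine Finset.sum_congr rfl fun j _ => ?_
      rw [← Finset.sum_mul, ← Finset.mul_sum]
      simp only [hf]; ring
    rw [this]; simp [hw]
  have hcsum : ∑ a, c a ≤ - 1 / 10 := by
    have e : kbar n K l1 lL x = (∑ a, c a) * κ := by
      rw [← hfx, Finset.sum_mul]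
      calc _ = ∑ j, lam2 B l1 lL j * f j * w j + ∑ j, ∑ a, c a * (lam2 B l1 lL j * f j * φ a j) := by
            rw [← Finset.sum_add_distrib]
            refine Finset.sum_congr rfl fun j _ => ?_
            rw [hc j, mul_add, Finset.mul_sum]
            congr 1
            exact Finset.sum_congr rfl fun a _ => by ring
        _ = _ := by
            rw [hfw, zero_add, Finset.sum_comm]
            refine Finset.sum_congr rfl fun a _ => ?_
            rw [← Finset.mul_sum, hfφ]
    rw [e, mul_div_assoc, div_self hκ.ne', mul_one] at hx
    exact hx
  set s := ∑ j, lam2 B l1 lL j * w j * w j with hs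
  have hs0 : 0 ≤ s := Finset.sum_nonneg fun j _ => by
    rw [mul_assoc]; exact mul_nonneg (hl j).le (mul_self_nonneg _)
  have hsn : s ≤ n * κ := by
    refine hwle.trans ?_
    rw [phi_kernel B (n * K) hB]
    simp only [sub_self, mul_zero, Real.cos_zero, Finset.sum_const, Finset.card_range, nsmul_eq_mul,
      mul_one, Nat.cast_mul]
    have : (1 : ℝ) ≤ n := by exact_mod_cast hn
    rw [hκd]
    nlinarith
  refine ⟨statW n d B φ f w ⁻¹' badB n d κ, measurable_statW n d B φ f w (meas_badB n d κ), ?_, ?_⟩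
  · intro W hW
    by_contra hE
    have hE' : statW n d B φ f w W ∉ badB n d κ := hE
    simp only [badB, Set.mem_union, Set.mem_ofPred_eq, not_or, not_and, not_lt] at hE'
    obtain ⟨g1, g2⟩ := hE'
    have g2 := g2 g1
    have hQ : 0 < distSq (statW n d B φ f w W).1 (statW n d B φ f w W).2.1 :=
      lt_of_lt_of_le (by positivity) g1
    have hrow : ∀ a i, (statW n d B φ f w W).1 a i + (statW n d B φ f w W).2.1 i
        = ∑ j, W i j * phiF B (xtr n a) j := by
      intro a i
      simp only [statW]
      rw [← Finset.sum_add_distrib]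
      exact Finset.sum_congr rfl fun j _ => by simp only [hφ]; ring
    have hb := det_bound n d hn (statW n d B φ f w W).1 (by
        intro i
        simp only [statW]
        rw [Finset.sum_comm]
        apply Finset.sum_eq_zero
        intro j _
        rw [← Finset.mul_sum, Finset.sum_sub_distrib, ← hfn]
        simp) (statW n d B φ f w W).2.1 (statW n d B φ f w W).2.2 c (βh W) (by
        simp only [hrow]
        exact hβ W) hQ g2
    simp only [hrow] at hb
    have e : rfsFun B d W (βh W) x = ∑ i, βh W i *
        ((statW n d B φ f w W).2.2 i + ∑ a, c a * ∑ j, W i j * phiF B (xtr n a) j) := by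
      unfold rfsFun
      refine Finset.sum_congr rfl fun i _ => ?_
      congr 1
      simp only [statW, Finset.mul_sum]
      rw [Finset.sum_comm, ← Finset.sum_add_distrib]
      refine Finset.sum_congr rfl fun j _ => ?_
      rw [hc j, mul_add, Finset.mul_sum]
      congr 1
      exact Finset.sum_congr rfl fun a _ => by simp only [hφ]; ring
    rw [e] at hW
    linarith
  · have hco : ∀ j, (((lam2 B l1 lL j).toNNReal : NNReal) : ℝ) = lam2 B l1 lL j :=
      fun j => Real.coe_toNNReal _ (hl j).le
    have := caseB_abs n d B hn hnd (fun j => (lam2 B l1 lL j).toNNReal)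
      (fun j => Real.toNNReal_pos.2 (hl j)) φ f w κ.toNNReal s.toNNReal hfn (Real.toNNReal_pos.2 hκ)
      (by simp only [hco, Real.coe_toNNReal _ hκ.le]; exact hfφ)
      (by simp only [hco, Real.coe_toNNReal _ hs0]; exact hs.symm)
      (by simp only [hco]; exact hw)
    rw [Real.coe_toNNReal _ hκ.le, Real.coe_toNNReal _ hs0] at this
    refine this.trans ?_
    refine add_le_add le_rfl (ENNReal.ofReal_le_ofReal ?_)
    rw [div_le_div_iff₀ (by positivity) hd']
    nlinarith [mul_le_mul_of_nonneg_right hsn hd'.le]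


open MeasureTheory Filter ProbabilityTheory

open Classical in
lemma markov_cells {X : Type*} [MeasurableSpace X] (μ : Measure X) (N : ℕ) (hN : 0 < N)
    (E : Fin N → Set X) (hm : ∀ j, MeasurableSet (E j)) (ε : ENNReal) (hE : ∀ j, μ (E j) ≤ ε)
    (δ : ℝ) (hδ : 0 < δ) (A : Set X)
    (hA : ∀ W ∈ A, δ * N < ((Finset.univ.filter (fun j => W ∈ E j)).card : ℝ)) :
    μ A ≤ ε / ENNReal.ofReal δ := by
  have h1 : ∫⁻ W, ∑ j, (E j).indicator (fun _ => (1 : ENNReal)) W ∂μ ≤ N * ε := by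
    rw [lintegral_finsetSum _ (fun j _ => measurable_const.indicator (hm j))]
    calc _ ≤ ∑ _j : Fin N, ε := Finset.sum_le_sum fun j _ => by
          rw [lintegral_indicator (hm j)]; simpa using hE j
      _ = _ := by simp
  have h2 := mul_meas_ge_le_lintegral₀ (μ := μ)
    (f := fun W => ∑ j, (E j).indicator (fun _ => (1 : ENNReal)) W)
    (Finset.measurable_fun_sum _ (fun j _ => measurable_const.indicator (hm j))).aemeasurable
    (ENNReal.ofReal (δ * N))
  have h3 : A ⊆ {W | ENNReal.ofReal (δ * N) ≤ ∑ j, (E j).indicator (fun _ => (1 : ENNReal)) W} := by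
    intro W hW
    rw [Set.mem_ofPred_eq]
    have e : ∑ j, (E j).indicator (fun _ => (1 : ENNReal)) W
        = ((Finset.univ.filter (fun j => W ∈ E j)).card : ENNReal) := by
      simp [Set.indicator_apply]
    rw [e]
    exact (ENNReal.ofReal_le_ofReal (hA W hW).le).trans (by simp)
  have h4 : ENNReal.ofReal (δ * N) * μ A ≤ N * ε :=
    (mul_le_mul_right (measure_mono h3) _).trans (h2.trans h1)
  have hδ' : ENNReal.ofReal δ ≠ 0 := by simpa using hδ
  rw [ENNReal.le_div_iff_mul_le (Or.inl hδ') (Or.inl ENNReal.ofReal_ne_top)]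
  rw [ENNReal.ofReal_mul hδ.le, ENNReal.ofReal_natCast] at h4
  have hN' : (N : ENNReal) ≠ 0 := by exact_mod_cast hN.ne'
  have h5 : (N : ENNReal) * (μ A * ENNReal.ofReal δ) ≤ N * ε := by
    calc _ = ENNReal.ofReal δ * N * μ A := by ring
      _ ≤ _ := h4
  exact (ENNReal.mul_le_mul_iff_right hN' (ENNReal.natCast_ne_top N)).1 h5

lemma bad_B (n K B d : ℕ) (hn : 0 < n) (hK : 0 < K) (hB : B = 2 * (n * K) + 1) (hnd : 2 * n ≤ d)
    (l1 lL : ℝ) (h1 : 0 < l1) (hL : 0 < lL) (hs : l1 / 2 ≤ lL * K / 20)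
    (α : Fin B → ℝ) (hα : IsMinInterp n B (lam2 B l1 lL) α)
    (βh : (Fin d → Fin B → ℝ) → Fin d → ℝ)
    (hβ : ∀ W : Fin d → Fin B → ℝ, (∃ β, RFSInterpolates n B d W β) →
        RFSInterpolates n B d W (βh W) ∧
        ∀ β : Fin d → ℝ, RFSInterpolates n B d W β → ∑ i, (βh W i) ^ 2 ≤ ∑ i, (β i) ^ 2)
    (δ : ℝ) (hδ : 0 < δ) :
    (Measure.pi fun _ : Fin d => Measure.pi fun j : Fin B => gaussianReal 0 (lam2 B l1 lL j).toNNReal)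
      {W | δ < |advRisk (rfsFun B d W (βh W)) (1 / (n : ℝ)) -
                advRisk (fun x => ∑ j, α j * phiF B x j) (1 / (n : ℝ))|}
      ≤ (ENNReal.ofReal (8 * Vsq / d) + ENNReal.ofReal (400 * n / d)) / ENNReal.ofReal δ := by
  classical
  have hx := fun j : Fin (2 * n) => m_dip n K hn hK l1 lL h1 hL hs j
  choose E hEm hEs hEμ using fun j : Fin (2 * n) => caseB_point n K B d hn hK hB hnd l1 lL h1 hL
    (dip n K j) (hx j) βh hβ
  refine markov_cells _ (2 * n) (by omega) E hEm _ hEμ δ hδ _ ?_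
  intro W hW
  have := risk_event n hn _ _ δ (fun j hj => ⟨dip n K j, dip_mem n K hn hK j, by
    rw [fhat_formula n K B hn hK hB l1 lL h1 hL α hα]
    have := hx ⟨j, hj⟩
    simp only at this
    linarith⟩) hW
  push_cast
  refine lt_of_lt_of_le this ?_
  have : (Finset.univ.filter (fun j : Fin (2 * n) => ∀ y ∈ cell n j, 0 < rfsFun B d W (βh W) y)).card
      ≤ (Finset.univ.filter (fun j => W ∈ E j)).card := by
    apply Finset.card_le_card
    intro j hj
    simp only [Finset.mem_filter, Finset.mem_univ, true_and] at hj ⊢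
    exact hEs j W (hj _ (dip_mem n K hn hK j))
  convert (Nat.cast_le (α := ℝ)).2 this

lemma bad_A (n K B d : ℕ) (hn : 2 ≤ n) (hK : 0 < K) (hB : B = 2 * (n * K) + 1) (p q : ℝ)
    (hp : 0 < p) (hq : 0 < q)
    (hdn : d ≤ 2 * n) (hBp : (B : ℝ) ≤ (n : ℝ) ^ (p + 1))
    (l1 lL : ℝ) (h1 : 0 < l1) (h1L : l1 ≤ lL) (hr : lL / l1 ≤ (n : ℝ) ^ q)
    (hs : l1 / 2 ≤ lL * K / 20)
    (α : Fin B → ℝ) (hα : IsMinInterp n B (lam2 B l1 lL) α)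
    (βh : (Fin d → Fin B → ℝ) → Fin d → ℝ)
    (δ : ℝ) (hδ : 0 < δ)
    (hKn : (p + q + 2) * Real.log n + 1 ≤ δ * K * Real.log 2) :
    (Measure.pi fun _ : Fin d => Measure.pi fun j : Fin B => gaussianReal 0 (lam2 B l1 lL j).toNNReal)
      {W | δ < |advRisk (rfsFun B d W (βh W)) (1 / (n : ℝ)) -
                advRisk (fun x => ∑ j, α j * phiF B x j) (1 / (n : ℝ))|}
      ≤ ENNReal.ofReal (Real.exp (- (2 * n))) := by
  classical
  have hL : 0 < lL := h1.trans_le h1L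
  have hn0 : 0 < n := by omega
  have hnR : (2 : ℝ) ≤ n := by exact_mod_cast hn
  have hlog2 : 0 < Real.log 2 := Real.log_pos (by norm_num)
  have hlogn : Real.log 2 ≤ Real.log n := Real.log_le_log (by norm_num) hnR
  set j0 := ⌈δ * (2 * n)⌉₊ with hj0
  have hsub : {W | δ < |advRisk (rfsFun B d W (βh W)) (1 / (n : ℝ)) -
                advRisk (fun x => ∑ j, α j * phiF B x j) (1 / (n : ℝ))|} ⊆ badA n B d j0 := by
    intro W hW
    have hx := fun j : Fin (2 * n) => m_dip n K hn0 hK l1 lL h1 hL hs j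
    have := risk_event n hn0 _ _ δ (fun j hj => ⟨dip n K j, dip_mem n K hn0 hK j, by
      rw [fhat_formula n K B hn0 hK hB l1 lL h1 hL α hα]
      have := hx ⟨j, hj⟩
      simp only at this
      linarith⟩) hW
    refine ⟨_, Nat.ceil_le.2 this.le, βh W, ?_⟩
    intro j hj
    simpa using hj
  set μ := (Measure.pi fun _ : Fin d =>
    Measure.pi fun j : Fin B => gaussianReal 0 (lam2 B l1 lL j).toNNReal) with hμ
  refine (measure_mono hsub).trans ?_
  have hA := caseA n K B d j0 hn0 hB l1 lL h1 h1L
  rw [← hμ] at hA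
  set C := NNReal.sqrt (lL.toNNReal / l1.toNNReal) with hC
  have hfin : μ (badA n B d j0) ≠ ⊤ := measure_ne_top _ _
  have hA' := ENNReal.toReal_mono (by finiteness) hA
  simp only [ENNReal.toReal_mul, ENNReal.toReal_pow, ENNReal.toReal_ofNat, ENNReal.coe_toReal] at hA'
  have hBe : (((2 * n : ℕ) : ENNReal) * K + 1).toReal = (B : ℝ) := by
    rw [hB]
    have : (((2 * n : ℕ) : ENNReal) * K + 1) = ((2 * (n * K) + 1 : ℕ) : ENNReal) := by
      push_cast; ring
    rw [this, ENNReal.toReal_natCast]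
  rw [hBe] at hA'
  set m := (μ (badA n B d j0)).toReal with hm
  rw [← ENNReal.ofReal_toReal hfin, ← hm]
  apply ENNReal.ofReal_le_ofReal
  have hnpos : (0 : ℝ) < n := by linarith
  have hCle : (C : ℝ) ≤ Real.exp (q * Real.log n) := by
    have h0 : (1 : ℝ) ≤ (n : ℝ) ^ q := Real.one_le_rpow (by linarith) hq.le
    have : (C : ℝ) = Real.sqrt (lL / l1) := by
      rw [hC, Real.coe_sqrt, NNReal.coe_div, Real.coe_toNNReal _ hL.le, Real.coe_toNNReal _ h1.le]
    rw [this, mul_comm, ← Real.rpow_def_of_pos hnpos]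
    refine (Real.sqrt_le_sqrt hr).trans ?_
    rw [Real.sqrt_le_left (by linarith)]
    nlinarith
  have hBle : (B : ℝ) ≤ Real.exp ((p + 1) * Real.log n) := by
    rw [mul_comm, ← Real.rpow_def_of_pos hnpos]; exact hBp
  have h2 : (2 : ℝ) ^ (2 * n) ≤ Real.exp (2 * n * Real.log n) := by
    have : (2 : ℝ) ^ (2 * n) ≤ (n : ℝ) ^ (2 * n) := by gcongr
    refine this.trans (le_of_eq ?_)
    rw [← Real.exp_log hnpos, ← Real.exp_nat_mul, Real.exp_log hnpos]; push_cast; ring_nf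
  have hCB : (C : ℝ) ^ d * (B : ℝ) ^ d ≤ Real.exp (2 * n * ((p + q + 1) * Real.log n)) := by
    rw [← mul_pow]
    have e1 : (C : ℝ) * B ≤ Real.exp ((p + q + 1) * Real.log n) := by
      calc (C : ℝ) * B ≤ Real.exp (q * Real.log n) * Real.exp ((p + 1) * Real.log n) := by gcongr
        _ = _ := by rw [← Real.exp_add]; ring_nf
    calc _ ≤ (Real.exp ((p + q + 1) * Real.log n)) ^ d := by gcongr
      _ = Real.exp (d * ((p + q + 1) * Real.log n)) := by rw [Real.exp_nat_mul]
      _ ≤ _ := by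
        apply Real.exp_le_exp.2
        apply mul_le_mul_of_nonneg_right _ (by nlinarith)
        exact_mod_cast hdn
  have hleft : Real.exp (2 * n * (δ * K * Real.log 2)) ≤ (2 : ℝ) ^ (j0 * K) := by
    have : (2 : ℝ) ^ (j0 * K) = Real.exp ((j0 * K : ℕ) * Real.log 2) := by
      rw [Real.exp_nat_mul, Real.exp_log (by norm_num)]
    rw [this]
    apply Real.exp_le_exp.2
    push_cast
    have hc : δ * (2 * n) ≤ j0 := Nat.le_ceil _
    have : δ * (2 * n) * (K * Real.log 2) ≤ j0 * (K * Real.log 2) := by gcongr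
    nlinarith
  have hm0 : 0 ≤ m := ENNReal.toReal_nonneg
  have hfinal : Real.exp (2 * n * (δ * K * Real.log 2)) * m
      ≤ Real.exp (2 * n * ((p + q + 2) * Real.log n)) := by
    calc _ ≤ (2 : ℝ) ^ (j0 * K) * m := by gcongr
      _ ≤ _ := hA'
      _ = (2 : ℝ) ^ (2 * n) * ((C : ℝ) ^ d * (B : ℝ) ^ d) := by ring
      _ ≤ Real.exp (2 * n * Real.log n) * Real.exp (2 * n * ((p + q + 1) * Real.log n)) := by gcongr
      _ = _ := by rw [← Real.exp_add]; ring_nf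
  have : m ≤ Real.exp (2 * n * ((p + q + 2) * Real.log n) - 2 * n * (δ * K * Real.log 2)) := by
    rw [Real.exp_sub, le_div_iff₀ (Real.exp_pos _), mul_comm]; exact hfinal
  refine this.trans (Real.exp_le_exp.2 ?_)
  nlinarith


open MeasureTheory Filter ProbabilityTheory

lemma tendsto_rpow_nat (r : ℝ) (hr : 0 < r) : Tendsto (fun n : ℕ => (n : ℝ) ^ r) atTop atTop :=
  (tendsto_rpow_atTop hr).comp tendsto_natCast_atTop_atTop

lemma setup_ev (p q : ℝ) (hp : 1 < p) (hq : 1 < q) (B : ℕ → ℕ)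
    (hB : ∀ n : ℕ, 2 ≤ n → BilevelB n (B n) p) :
    ∀ᶠ n : ℕ in atTop, ∃ K : ℕ, 2 ≤ n ∧ 0 < K ∧ B n = 2 * (n * K) + 1 ∧ (n : ℝ) ^ (p - 1) / 4 ≤ K ∧
      (B n : ℝ) ≤ 2 * (n : ℝ) ^ p ∧
      0 < (n : ℝ) ^ (-q) * (B n : ℝ) ∧ 0 < (1 - (n : ℝ) ^ (-q)) * (B n : ℝ) / ((B n : ℝ) - 1) ∧
      (n : ℝ) ^ (-q) * (B n : ℝ) / 2 ≤ (1 - (n : ℝ) ^ (-q)) * (B n : ℝ) / ((B n : ℝ) - 1) * K / 20 ∧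
      (1 - (n : ℝ) ^ (-q)) * (B n : ℝ) / ((B n : ℝ) - 1) / ((n : ℝ) ^ (-q) * (B n : ℝ)) ≤ (n : ℝ) ^ q ∧
      1 / 2 ≤ (1 - (n : ℝ) ^ (-q)) * (B n : ℝ) / ((B n : ℝ) - 1) := by
  filter_upwards [eventually_ge_atTop 2,
    (tendsto_rpow_nat (p - 1) (by linarith)).eventually_ge_atTop 4,
    (tendsto_rpow_nat (q - 1) (by linarith)).eventually_ge_atTop 40] with n hn h4 h40
  obtain ⟨hodd, ⟨K, hK⟩, hab⟩ := hB n hn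
  have hnR : (2 : ℝ) ≤ n := by exact_mod_cast hn
  have hn0 : (0 : ℝ) < n := by linarith
  have hBK : B n = 2 * (n * K) + 1 := by
    have := hodd.pos
    rw [mul_assoc] at hK
    omega
  have hBR : (B n : ℝ) = 2 * (n * K) + 1 := by rw [hBK]; push_cast; ring
  have hpp : (n : ℝ) ^ p = n * (n : ℝ) ^ (p - 1) := by
    rw [Real.rpow_sub_one hn0.ne']; field_simp
  have hqq : (n : ℝ) ^ q = n * (n : ℝ) ^ (q - 1) := by
    rw [Real.rpow_sub_one hn0.ne']; field_simp
  obtain ⟨hlo, hhi⟩ := abs_le.1 hab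
  have hKlo : (n : ℝ) ^ (p - 1) / 4 ≤ K := by
    rw [hpp, hBR] at hlo
    have : (n : ℝ) * ((n : ℝ) ^ (p - 1) / 4) ≤ n * K := by nlinarith
    exact le_of_mul_le_mul_left this hn0
  have hK1 : (1 : ℝ) ≤ K := by linarith
  have hK0 : 0 < K := by exact_mod_cast (by linarith : (0 : ℝ) < K)
  have hg0 : 0 < (n : ℝ) ^ (-q) := Real.rpow_pos_of_pos hn0 _
  have hgq : (n : ℝ) ^ (-q) * (n : ℝ) ^ q = 1 := by
    rw [← Real.rpow_add hn0]; simp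
  set g := (n : ℝ) ^ (-q) with hg
  have hgn : g * n ≤ 1 / 40 := by
    rw [hqq] at hgq
    have : 0 < g * n := by positivity
    nlinarith
  have hg2 : g ≤ 1 / 2 := by nlinarith
  have hBm : (B n : ℝ) - 1 = 2 * (n * K) := by rw [hBR]; ring
  have hBpos : (0 : ℝ) < B n := by rw [hBR]; positivity
  have hBm0 : (0 : ℝ) < 2 * ((n : ℝ) * K) := by positivity
  refine ⟨K, hn, hK0, hBK, hKlo, ?_, by positivity, ?_, ?_, ?_, ?_⟩
  · rw [hpp] at hhi ⊢; nlinarith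
  · rw [hBm]; apply div_pos (mul_pos (by linarith) hBpos) hBm0
  · rw [hBm]
    have e : (1 - g) * (B n : ℝ) / (2 * (n * K)) * K / 20 = (B n : ℝ) * ((1 - g) / (40 * n)) := by
      field_simp; ring
    rw [e, show g * (B n : ℝ) / 2 = (B n : ℝ) * (g / 2) by ring]
    apply mul_le_mul_of_nonneg_left _ hBpos.le
    rw [le_div_iff₀ (by positivity)]
    nlinarith
  · rw [hBm, div_le_iff₀ (by positivity), show (n : ℝ) ^ q * (g * (B n : ℝ)) = (g * (n : ℝ) ^ q) * B n by ring,
      hgq, div_le_iff₀ hBm0]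
    have : (1 : ℝ) ≤ 2 * (n * K) := by nlinarith
    nlinarith
  · rw [hBm, le_div_iff₀ hBm0]
    nlinarith

lemma caseT_large (d : ℕ → ℕ) (T : ℝ) (hT : 1 < T)
    (hd : ∀ n : ℕ, 2 ≤ n → |(d n : ℝ) - (n : ℝ) ^ T| ≤ 1) :
    Tendsto (fun n : ℕ => (n : ℝ) / d n) atTop (nhds 0) ∧ ∀ᶠ n : ℕ in atTop, 2 * n ≤ d n := by
  have key : ∀ᶠ n : ℕ in atTop, (n : ℝ) * ((n : ℝ) ^ (T - 1) - 1) ≤ d n := by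
    filter_upwards [eventually_ge_atTop 2] with n hn
    have hnR : (2 : ℝ) ≤ n := by exact_mod_cast hn
    have hpp : (n : ℝ) ^ T = n * (n : ℝ) ^ (T - 1) := by
      rw [Real.rpow_sub_one (by linarith)]; field_simp
    have := (abs_le.1 (hd n hn)).1
    rw [hpp] at this
    nlinarith
  have hto : Tendsto (fun n : ℕ => (n : ℝ) ^ (T - 1) - 1) atTop atTop :=
    tendsto_atTop_add_const_right _ (-1) (tendsto_rpow_nat (T - 1) (by linarith))
  constructor
  · refine squeeze_zero' (Eventually.of_forall fun n => by positivity) ?_ hto.inv_tendsto_atTop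
    filter_upwards [key, hto.eventually_ge_atTop 1, eventually_ge_atTop 2] with n h1 h2 hn
    have hnR : (2 : ℝ) ≤ n := by exact_mod_cast hn
    have hdpos : (0 : ℝ) < d n := lt_of_lt_of_le (by nlinarith) h1
    rw [Pi.inv_apply, div_le_iff₀ hdpos, inv_mul_eq_div, le_div_iff₀ (by linarith)]
    exact h1
  · filter_upwards [key, hto.eventually_ge_atTop 2] with n h1 h2
    have : ((2 * n : ℕ) : ℝ) ≤ d n := by
      push_cast
      have : (0 : ℝ) ≤ n := by positivity
      nlinarith
    exact_mod_cast this


open MeasureTheory Filter ProbabilityTheory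

/-- **RFS adversarial risk converges to the Fourier adversarial risk.**  Fix `p, q > 1`
and `T > 6p + 1 - 2q`.  With `d = n^T` RFS features whose Gaussian weight vectors are
i.i.d. `N(0, Σ(n,p,q))`, the adversarial risk at radius `1/n` of the minimum-`ℓ₂`-norm RFS
interpolator `ĝ_n` converges in probability to that of the Fourier interpolator `f̂_n`:
for every `δ > 0`, `P(|C_adv(ĝ_n, 1/n) - C_adv(f̂_n, 1/n)| > δ) → 0` as `n → ∞`. -/
theorem stmt_10 (p q T : ℝ) (hp : 1 < p) (hq : 1 < q) (hT : 6 * p + 1 - 2 * q < T)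
    (B d : ℕ → ℕ)
    (hB : ∀ n : ℕ, 2 ≤ n → BilevelB n (B n) p)
    (hd : ∀ n : ℕ, 2 ≤ n → |(d n : ℝ) - (n : ℝ) ^ T| ≤ 1)
    (αhat : (n : ℕ) → Fin (B n) → ℝ)
    (hα : ∀ n : ℕ, 2 ≤ n → IsMinInterp n (B n) (bilevelLam n (B n) q) (αhat n))
    (βhat : (n : ℕ) → (Fin (d n) → Fin (B n) → ℝ) → Fin (d n) → ℝ)
    (hβ : ∀ n : ℕ, 2 ≤ n → ∀ W : Fin (d n) → Fin (B n) → ℝ,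
      (∃ β, RFSInterpolates n (B n) (d n) W β) →
        RFSInterpolates n (B n) (d n) W (βhat n W) ∧
        ∀ β : Fin (d n) → ℝ, RFSInterpolates n (B n) (d n) W β →
          ∑ i, (βhat n W i) ^ 2 ≤ ∑ i, (β i) ^ 2) :
    ∀ δ : ℝ, 0 < δ →
      Tendsto (fun n : ℕ =>
          rfsMeasure n (B n) (d n) q
            {W | δ < |advRisk (rfsFun (B n) (d n) W (βhat n W)) (1 / (n : ℝ)) -
                advRisk (fun x => ∑ j, αhat n j * phiF (B n) x j) (1 / (n : ℝ))|})
        atTop (nhds 0) := by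
  intro δ hδ
  have hset := setup_ev p q hp hq B hB
  rcases le_or_gt T 1 with hT1 | hT1
  · -- few features: `d ≤ n + 1`
    have hq3 : 3 * p < q := by linarith
    have hlim : Tendsto (fun n : ℕ => ENNReal.ofReal (Real.exp (-(2 * (n : ℝ))))) atTop (nhds 0) := by
      have : Tendsto (fun n : ℕ => Real.exp (-(2 * (n : ℝ)))) atTop (nhds 0) :=
        Real.tendsto_exp_neg_atTop_nhds_zero.comp
          (tendsto_natCast_atTop_atTop.const_mul_atTop (by norm_num))
      simpa using ENNReal.tendsto_ofReal this
    have hlog : ∀ᶠ n : ℕ in atTop,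
        (p + q + 2) * Real.log n + 1 ≤ δ * ((n : ℝ) ^ (p - 1) / 4) * Real.log 2 := by
      have h1 : Tendsto (fun n : ℕ => ((n : ℝ) ^ (p - 1)) * (δ / 4 * Real.log 2 / 2)) atTop atTop :=
        (tendsto_rpow_nat (p - 1) (by linarith)).atTop_mul_const
          (by have := Real.log_pos (show (1 : ℝ) < 2 by norm_num); positivity)
      have h2 : ∀ᶠ n : ℕ in atTop,
          Real.log n ≤ (δ / 4 * Real.log 2 / 2 / (p + q + 2)) * (n : ℝ) ^ (p - 1) := by
        have h3 := (isLittleO_log_rpow_atTop (show 0 < p - 1 by linarith)).bound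
          (show 0 < δ / 4 * Real.log 2 / 2 / (p + q + 2) by
            have := Real.log_pos (show (1 : ℝ) < 2 by norm_num); positivity)
        filter_upwards [tendsto_natCast_atTop_atTop.eventually h3] with n hn
        rw [Real.norm_of_nonneg (Real.rpow_nonneg (Nat.cast_nonneg n) _)] at hn
        exact (le_abs_self _).trans hn
      filter_upwards [h1.eventually_ge_atTop 1, h2] with n a b
      have hc : 0 < p + q + 2 := by linarith
      have b' := mul_le_mul_of_nonneg_left b hc.le
      have e : (p + q + 2) * (δ / 4 * Real.log 2 / 2 / (p + q + 2) * (n : ℝ) ^ (p - 1))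
        = δ / 4 * Real.log 2 / 2 * (n : ℝ) ^ (p - 1) := by field_simp
      rw [e] at b'
      nlinarith
    have hl1 : ∀ᶠ n : ℕ in atTop, 4 ≤ (n : ℝ) ^ (q - p) :=
      (tendsto_rpow_nat (q - p) (by linarith)).eventually_ge_atTop 4
    refine tendsto_of_tendsto_of_tendsto_of_le_of_le' tendsto_const_nhds hlim
      (Eventually.of_forall fun _ => zero_le) ?_
    filter_upwards [hset, hlog, hl1] with n hS hlg hl
    obtain ⟨K, hn, hK, hBK, hKlo, hBhi, h1, hL, hs, hr, hLh⟩ := hS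
    have hnR : (2 : ℝ) ≤ n := by exact_mod_cast hn
    have hn0 : (0 : ℝ) < n := by linarith
    have hdn : d n ≤ 2 * n := by
      have a := (abs_le.1 (hd n hn)).2
      have b : (n : ℝ) ^ T ≤ n := by
        calc (n : ℝ) ^ T ≤ (n : ℝ) ^ (1 : ℝ) := Real.rpow_le_rpow_of_exponent_le (by linarith) hT1
          _ = n := Real.rpow_one _
      have : (d n : ℝ) ≤ ((2 * n : ℕ) : ℝ) := by push_cast; linarith
      exact_mod_cast this
    have hBp : (B n : ℝ) ≤ (n : ℝ) ^ (p + 1) := by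
      rw [Real.rpow_add_one hn0.ne']
      have : 0 < (n : ℝ) ^ p := Real.rpow_pos_of_pos hn0 _
      nlinarith
    have h1L : (n : ℝ) ^ (-q) * (B n : ℝ) ≤ (1 - (n : ℝ) ^ (-q)) * (B n : ℝ) / ((B n : ℝ) - 1) := by
      refine le_trans ?_ hLh
      have e : (n : ℝ) ^ (-q) * (n : ℝ) ^ p * (n : ℝ) ^ (q - p) = 1 := by
        rw [← Real.rpow_add hn0, ← Real.rpow_add hn0]; ring_nf; simp
      have g0 : 0 < (n : ℝ) ^ (-q) := Real.rpow_pos_of_pos hn0 _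
      have g1 : 0 < (n : ℝ) ^ p := Real.rpow_pos_of_pos hn0 _
      have : (n : ℝ) ^ (-q) * (n : ℝ) ^ p ≤ 1 / 4 := by
        have : 0 < (n : ℝ) ^ (-q) * (n : ℝ) ^ p := by positivity
        nlinarith
      nlinarith
    refine bad_A n K (B n) (d n) hn hK hBK p q (by linarith) (by linarith) hdn hBp _ _ h1 h1L hr hs
      (αhat n) (hα n hn) (βhat n) δ hδ ?_
    refine hlg.trans ?_
    have := Real.log_pos (show (1 : ℝ) < 2 by norm_num)
    gcongr
  · -- many features: `n / d → 0`
    obtain ⟨hnd, h2n⟩ := caseT_large d T hT1 hd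
    have hlim : Tendsto (fun n : ℕ => (ENNReal.ofReal (8 * Vsq / d n) + ENNReal.ofReal (400 * n / d n))
        / ENNReal.ofReal δ) atTop (nhds 0) := by
      have e1 : Tendsto (fun n : ℕ => ENNReal.ofReal (400 * n / d n)) atTop (nhds 0) := by
        have := ENNReal.tendsto_ofReal (hnd.const_mul 400)
        simpa [mul_div_assoc] using this
      have e2 : Tendsto (fun n : ℕ => ENNReal.ofReal (8 * Vsq / d n)) atTop (nhds 0) := by
        have h0 : Tendsto (fun n : ℕ => 8 * Vsq / (d n : ℝ)) atTop (nhds 0) := by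
          have hv := Vsq_nonneg
          refine squeeze_zero' (Eventually.of_forall fun n => by positivity) ?_
            (by simpa using hnd.const_mul (8 * Vsq))
          filter_upwards [eventually_ge_atTop 1] with n hn
          have : (1 : ℝ) ≤ n := by exact_mod_cast hn
          rw [← mul_div_assoc]
          exact div_le_div_of_nonneg_right (by nlinarith) (Nat.cast_nonneg _)
        simpa using ENNReal.tendsto_ofReal h0
      have e3 := e2.add e1
      rw [add_zero] at e3
      have hδ' : ENNReal.ofReal δ ≠ 0 := by simpa using hδ
      simpa using ENNReal.Tendsto.div_const e3 (Or.inr hδ')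
    refine tendsto_of_tendsto_of_tendsto_of_le_of_le' tendsto_const_nhds hlim
      (Eventually.of_forall fun _ => zero_le) ?_
    filter_upwards [hset, h2n] with n hS h2
    obtain ⟨K, hn, hK, hBK, hKlo, hBhi, h1, hL, hs, hr, hLh⟩ := hS
    exact bad_B n K (B n) (d n) (by omega) hK hBK h2 _ _ h1 hL hs (αhat n) (hα n hn) (βhat n)
      (hβ n hn) δ hδ
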